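/- arXiv:1510.02999 — 4 statements merged into one kernel-verified Lean document; each statement's English description precedes it below -/
import Mathlib

section
/- There exists a constant C > 0 such that for every u ∈ C_c^∞(ℝ³; ℝ³) and every x ∈ ℝ³ with x ≠ 0, writing r = |x|: r |u(x)| ≤ C ( Σ_{|α| ≤ 1} ‖∂_ρ Ω̃^α u‖_{L²(|y| ≥ r)} )^{1/2} · ( Σ_{|α| ≤ 2} ‖Ω̃^α u‖_{L²(|y| ≥ r)} )^{1/2}, where ∂_ρ = (y/|y|)·∇ is the radial derivative and Ω̃^α denotes an iterated product of at most |α| of the operators Ω̃₁, Ω̃₂, Ω̃₃. -/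
open MeasureTheory

noncomputable section

/-- Three-dimensional Euclidean space. -/
abbrev E3 : Type := EuclideanSpace ℝ (Fin 3)

/-- Vector fields on `ℝ³`. -/
abbrev VF3 : Type := E3 → Fin 3 → ℝ

/-- The spatial partial derivative `∂_j u` of a scalar function on `ℝ³`. -/
noncomputable def pd (j : Fin 3) (u : E3 → ℝ) (x : E3) : ℝ :=
  fderiv ℝ u x (EuclideanSpace.single j 1)

/-- The rotation generators `V¹ = e₂⊗e₃ − e₃⊗e₂`, `V² = e₃⊗e₁ − e₁⊗e₃`,
`V³ = e₁⊗e₂ − e₂⊗e₁` (zero-based indexing). -/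
def Vmat (i : Fin 3) : Matrix (Fin 3) (Fin 3) ℝ := fun j k =>
  if j = i + 1 ∧ k = i + 2 then 1 else if j = i + 2 ∧ k = i + 1 then -1 else 0

/-- The angular momentum operator `Ω_i` on scalar functions,
`Ω₁ = x₂∂₃ − x₃∂₂` etc. (zero-based, cyclic). -/
noncomputable def angOp (i : Fin 3) (u : E3 → ℝ) (x : E3) : ℝ :=
  x (i + 1) * pd (i + 2) u x - x (i + 2) * pd (i + 1) u x

/-- The modified angular momentum operator `Ω̃_i u = Ω_i u + V^i u` on vector fields. -/
noncomputable def omtV (i : Fin 3) (u : VF3) : VF3 := fun x j =>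
  angOp i (fun y => u y j) x + ∑ k, Vmat i j k * u x k

/-- The radial derivative `∂_ρ = (y/|y|)·∇`, applied componentwise to a vector field. -/
noncomputable def radV (u : VF3) : VF3 := fun x j =>
  ∑ k, (x k / ‖x‖) * pd k (fun y => u y j) x

/-- The `L²` norm of a vector field over the exterior region `{|y| ≥ r}`. -/
noncomputable def l2tail (r : ℝ) (u : VF3) : ℝ :=
  (∫ y in {y : E3 | r ≤ ‖y‖}, ∑ j, (u y j) ^ 2) ^ ((1 : ℝ) / 2)

/-!
For a scalar function `g`, spherical coordinates are turned by an isometry so that `x` lies on the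
equator, away from the poles. In the two angles, the segments issuing from `x` sweep out a fan; on
each of them a weighted one-dimensional Sobolev inequality bounds `|g(x)|²`, and averaging over the
fan bounds `|g(x)|²` by the integral of `|g|² + ∑ᵢ |Ωᵢ g|²` over a patch of the sphere `|y| = |x|`,
with the weight `s ^ (-1/4)` in the latitude `s`. Writing the integral over the patch as an integral
of a radial derivative over `|y| ≥ |x|`, the Cauchy–Schwarz inequality separates
`∂_ρ h` (for `h = g`, `Ωᵢ g`) from `s ^ (-1/4) h`, whose square is integrable up to one more angular
derivative. The Jacobian of the coordinates supplies the power of `|x|`.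

For vector fields, this is applied to each component; `Ω̃ᵢ` differs from `Ωᵢ` by a constant matrix,
so that the scalar energies are bounded by those of the `Ω̃^α u`.
-/

section OneDim
open Set

lemma lintegral_mul_sq_le {α : Type*} [MeasurableSpace α] {μ : Measure α} {f g : α → ENNReal}
    (hf : AEMeasurable f μ) (hg : AEMeasurable g μ) :
    (∫⁻ x, f x * g x ∂μ) ^ 2 ≤ (∫⁻ x, f x ^ 2 ∂μ) * ∫⁻ x, g x ^ 2 ∂μ := by
  have holder := pow_le_pow_left' (ENNReal.lintegral_mul_le_Lp_mul_Lq μ (p := 2) (q := 2)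
    (by constructor <;> norm_num) hf hg) 2
  simpa [mul_pow, ← ENNReal.rpow_mul_natCast] using holder

lemma add_sq_le_two_mul (a b : ENNReal) : (a + b) ^ 2 ≤ 2 * (a ^ 2 + b ^ 2) := by
  simpa [show (2 : ℝ) - 1 = 1 by norm_num] using
    ENNReal.rpow_add_le_mul_rpow_add_rpow a b (p := 2) (by norm_num)

lemma sum_sq_le_sum_mul_sum {ι : Type*} (s : Finset ι) {a b c : ι → ENNReal}
    (h : ∀ i ∈ s, a i ^ 2 ≤ b i * c i) :
    (∑ i ∈ s, a i) ^ 2 ≤ (∑ i ∈ s, b i) * ∑ i ∈ s, c i := by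
  have sqrt_sq (z : ENNReal) : (z ^ (1 / 2 : ℝ)) ^ (2 : ℝ) = z := by
    rw [← ENNReal.rpow_mul, one_div_mul_cancel two_ne_zero, ENNReal.rpow_one]
  have root (i) (hi : i ∈ s) : a i ≤ b i ^ (1 / 2 : ℝ) * c i ^ (1 / 2 : ℝ) := by
    rw [← ENNReal.mul_rpow_of_nonneg _ _ (by norm_num), one_div,
      ENNReal.le_rpow_inv_iff (by norm_num)]
    exact_mod_cast h i hi
  have holder := ENNReal.inner_le_Lp_mul_Lq s (fun i => b i ^ (1 / 2 : ℝ))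
    (fun i => c i ^ (1 / 2 : ℝ)) (p := 2) (q := 2) (by constructor <;> norm_num)
  simp only [sqrt_sq] at holder
  calc (∑ i ∈ s, a i) ^ 2 ≤ _ := pow_le_pow_left' ((Finset.sum_le_sum root).trans holder) 2
    _ = _ := by simp [mul_pow, ← ENNReal.rpow_mul_natCast]

lemma lintegral_Ioc_ofReal_rpow {β : ℝ} (hβ : -1 < β) :
    ∫⁻ s in Ioc (0 : ℝ) 1, ENNReal.ofReal s ^ β = ENNReal.ofReal (β + 1)⁻¹ := by
  have integrable : IntegrableOn (fun s : ℝ => s ^ β) (Ioc 0 1) :=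
    (intervalIntegrable_iff_integrableOn_Ioc_of_le zero_le_one).1
      (intervalIntegral.intervalIntegrable_rpow' hβ)
  calc ∫⁻ s in Ioc (0 : ℝ) 1, ENNReal.ofReal s ^ β
      = ∫⁻ s in Ioc (0 : ℝ) 1, ENNReal.ofReal (s ^ β) :=
        setLIntegral_congr_fun measurableSet_Ioc fun s hs => ENNReal.ofReal_rpow_of_pos hs.1
    _ = ENNReal.ofReal (∫ s in Ioc (0 : ℝ) 1, s ^ β) :=
        (ofReal_integral_eq_lintegral_ofReal integrable <|
          (ae_restrict_mem measurableSet_Ioc).mono fun s hs => Real.rpow_nonneg hs.1.le _).symm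
    _ = ENNReal.ofReal (β + 1)⁻¹ := by
        rw [← intervalIntegral.integral_of_le zero_le_one, integral_rpow (Or.inl hβ),
          Real.one_rpow, Real.zero_rpow (by linarith), sub_zero, one_div]

lemma mul_lintegral_Ioc_comp_mul_le {c : ℝ} (hc : 0 < c) (hc1 : c ≤ 1) (f : ℝ → ENNReal) :
    ENNReal.ofReal c * ∫⁻ t in Ioc (0 : ℝ) 1, f (c * t) ≤ ∫⁻ t in Ioc (0 : ℝ) 1, f t := by
  have image : (fun t => c * t) '' Ioc 0 1 = Ioc 0 c := by
    rw [image_mul_left_Ioc hc, mul_zero, mul_one]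
  calc ENNReal.ofReal c * ∫⁻ t in Ioc (0 : ℝ) 1, f (c * t)
      = ∫⁻ t in (fun t => c * t) '' Ioc 0 1, f t := by
        rw [lintegral_image_eq_lintegral_abs_deriv_mul measurableSet_Ioc
          (fun t _ => (hasDerivAt_const_mul c).hasDerivWithinAt)
          (mul_right_injective₀ hc.ne').injOn]
        simp only [abs_of_pos hc, lintegral_const_mul' _ _ ENNReal.ofReal_ne_top]
    _ ≤ ∫⁻ t in Ioc (0 : ℝ) 1, f t := by
        rw [image]
        exact lintegral_mono_set (Ioc_subset_Ioc_right hc1)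

variable {F : Type*} [NormedAddCommGroup F] [NormedSpace ℝ F] {φ : ℝ → F}

lemma enorm_sub_le_lintegral_deriv_of_mem_Icc (hφ : ContDiff ℝ 1 φ) {a b x y : ℝ}
    (hx : x ∈ Icc a b) (hy : y ∈ Icc a b) :
    ‖φ x - φ y‖ₑ ≤ ∫⁻ z in Icc a b, ‖deriv φ z‖ₑ := by
  wlog hyx : y ≤ x generalizing x y
  · rw [enorm_sub_rev]
    exact this hy hx (le_of_not_ge hyx)
  exact (enorm_sub_le_lintegral_deriv_of_contDiffOn_Icc hφ.contDiffOn hyx).trans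
    (lintegral_mono_set (Icc_subset_Icc hy.1 hx.2))

lemma enorm_le_lintegral_Ioc (hφ : ContDiff ℝ 1 φ) {s : ℝ} (hs : s ∈ Icc 0 1) :
    ‖φ s‖ₑ ≤ ∫⁻ σ in Ioc 0 1, (‖φ σ‖ₑ + ‖deriv φ σ‖ₑ) := by
  have pointwise (σ : ℝ) (hσ : σ ∈ Ioc 0 1) :
      ‖φ s‖ₑ ≤ ‖φ σ‖ₑ + ∫⁻ τ in Ioc 0 1, ‖deriv φ τ‖ₑ := by
    rw [restrict_Ioc_eq_restrict_Icc]
    calc ‖φ s‖ₑ = ‖φ σ + (φ s - φ σ)‖ₑ := by rw [add_sub_cancel]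
      _ ≤ ‖φ σ‖ₑ + ‖φ s - φ σ‖ₑ := enorm_add_le _ _
      _ ≤ _ := add_le_add_right
        (enorm_sub_le_lintegral_deriv_of_mem_Icc hφ hs (Ioc_subset_Icc_self hσ)) _
  have averaged := setLIntegral_mono' (μ := volume) measurableSet_Ioc pointwise
  rw [lintegral_add_left hφ.continuous.enorm.measurable] at averaged ⊢
  simpa using averaged

lemma enorm_sq_le_lintegral_Ioc (hφ : ContDiff ℝ 1 φ) {α : ℝ} (hα : α < 1)
    {s : ℝ} (hs : s ∈ Icc 0 1) :
    ‖φ s‖ₑ ^ 2 ≤ 2 * ENNReal.ofReal (1 - α)⁻¹ *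
      ∫⁻ σ in Ioc 0 1, ENNReal.ofReal σ ^ α * (‖φ σ‖ₑ ^ 2 + ‖deriv φ σ‖ₑ ^ 2) := by
  set w : ℝ → ℝ → ENNReal := fun β σ => ENNReal.ofReal σ ^ β
  set v : ℝ → ENNReal := fun σ => ‖φ σ‖ₑ + ‖deriv φ σ‖ₑ
  have measurable_w (β : ℝ) : Measurable (w β) := by fun_prop
  have measurable_v : Measurable v :=
    hφ.continuous.enorm.measurable.add (hφ.continuous_deriv le_rfl).enorm.measurable
  have unweight (σ : ℝ) (hσ : σ ∈ Ioc 0 1) : v σ = w (-α / 2) σ * (w (α / 2) σ * v σ) := by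
    rw [← mul_assoc, ← ENNReal.rpow_add _ _ (by simpa using hσ.1) ENNReal.ofReal_ne_top]
    simp [neg_div]
  have w_sq (β σ : ℝ) : w (β / 2) σ ^ 2 = w β σ := by
    simp [w, ← ENNReal.rpow_mul_natCast]
  calc ‖φ s‖ₑ ^ 2
      ≤ (∫⁻ σ in Ioc 0 1, v σ) ^ 2 := pow_le_pow_left' (enorm_le_lintegral_Ioc hφ hs) 2
    _ = (∫⁻ σ in Ioc 0 1, w (-α / 2) σ * (w (α / 2) σ * v σ)) ^ 2 := by
        rw [setLIntegral_congr_fun measurableSet_Ioc unweight]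
    _ ≤ (∫⁻ σ in Ioc 0 1, w (-α) σ) * ∫⁻ σ in Ioc 0 1, w α σ * v σ ^ 2 := by
        simpa only [Pi.mul_apply, mul_pow, w_sq] using lintegral_mul_sq_le
          (μ := volume.restrict (Ioc 0 1)) (measurable_w (-α / 2)).aemeasurable
          ((measurable_w (α / 2)).mul measurable_v).aemeasurable
    _ ≤ ENNReal.ofReal (1 - α)⁻¹ *
          ∫⁻ σ in Ioc 0 1, 2 * (w α σ * (‖φ σ‖ₑ ^ 2 + ‖deriv φ σ‖ₑ ^ 2)) := by
        rw [lintegral_Ioc_ofReal_rpow (by linarith), neg_add_eq_sub]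
        refine mul_le_mul_right (lintegral_mono fun σ => ?_) _
        exact (mul_le_mul_right (add_sq_le_two_mul _ _) _).trans_eq (mul_left_comm _ _ _)
    _ = _ := by rw [lintegral_const_mul' _ _ (by simp)]; ring

lemma lintegral_Ioc_rpow_mul_enorm_sq_le (hφ : ContDiff ℝ 1 φ) {β : ℝ}
    (hβ : -1 < β) :
    ∫⁻ s in Ioc (0 : ℝ) 1, ENNReal.ofReal s ^ β * ‖φ s‖ₑ ^ 2 ≤
      2 * ENNReal.ofReal (β + 1)⁻¹ * ∫⁻ σ in Ioc 0 1, (‖φ σ‖ₑ ^ 2 + ‖deriv φ σ‖ₑ ^ 2) := by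
  have sup_bound (s : ℝ) (hs : s ∈ Ioc 0 1) :
      ‖φ s‖ₑ ^ 2 ≤ 2 * ∫⁻ σ in Ioc 0 1, (‖φ σ‖ₑ ^ 2 + ‖deriv φ σ‖ₑ ^ 2) := by
    simpa using enorm_sq_le_lintegral_Ioc hφ one_pos ⟨hs.1.le, hs.2⟩
  calc ∫⁻ s in Ioc (0 : ℝ) 1, ENNReal.ofReal s ^ β * ‖φ s‖ₑ ^ 2
      ≤ ∫⁻ s in Ioc (0 : ℝ) 1, ENNReal.ofReal s ^ β *
          (2 * ∫⁻ σ in Ioc 0 1, (‖φ σ‖ₑ ^ 2 + ‖deriv φ σ‖ₑ ^ 2)) :=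
        setLIntegral_mono' measurableSet_Ioc fun s hs => mul_le_mul_right (sup_bound s hs) _
    _ = _ := by
        rw [lintegral_mul_const _ (by fun_prop), lintegral_Ioc_ofReal_rpow hβ]; ring

lemma enorm_sq_le_lintegral_Ioi {φ : ℝ → ℝ} (hφ : ContDiff ℝ 1 φ) (hc : HasCompactSupport φ)
    (r : ℝ) : ‖φ r‖ₑ ^ 2 ≤ 2 * ∫⁻ ρ in Ioi r, ‖φ ρ‖ₑ * ‖deriv φ ρ‖ₑ := by
  have deriv_sq : deriv (fun ρ => φ ρ ^ 2) = fun ρ => 2 * (φ ρ * deriv φ ρ) := by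
    ext ρ
    simpa [mul_assoc] using ((hφ.differentiable one_ne_zero ρ).hasDerivAt.fun_pow 2).deriv
  have ftc : φ r ^ 2 = -∫ ρ in Ioi r, 2 * (φ ρ * deriv φ ρ) := by
    rw [← deriv_sq, HasCompactSupport.integral_Ioi_deriv_eq (hφ.pow 2)
      (hc.comp_left (g := (· ^ 2)) (by simp)), neg_neg]
  calc ‖φ r‖ₑ ^ 2 = ‖∫ ρ in Ioi r, 2 * (φ ρ * deriv φ ρ)‖ₑ := by
        rw [← enorm_pow, ftc, enorm_neg]
    _ ≤ ∫⁻ ρ in Ioi r, 2 * (‖φ ρ‖ₑ * ‖deriv φ ρ‖ₑ) :=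
        (enorm_integral_le_lintegral_enorm _).trans_eq (by simp [enorm_mul, Real.enorm_eq_ofReal])
    _ = _ := lintegral_const_mul' _ _ (by simp)

end OneDim

section Spherical
open Set Real

lemma measurePreserving_cylindrical :
    MeasurePreserving (fun q : ℝ × ℝ × ℝ => (!₂[q.2.1, q.2.2, q.1] : E3)) := by
  have insert_third := (volume_preserving_piFinSuccAbove (fun _ : Fin 3 => ℝ) 2).symm
  have pair := (MeasurePreserving.id (volume : Measure ℝ)).prod
    (volume_preserving_finTwoArrow ℝ).symm
  convert (PiLp.volume_preserving_toLp (Fin 3)).comp (insert_third.comp pair) using 1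
  · ext q i
    fin_cases i <;> rfl
  · rfl

/-- The point of the unit sphere with latitude `s` and longitude `t`. -/
def spherePoint (s t : ℝ) : E3 := !₂[cos s * cos t, cos s * sin t, sin s]

@[fun_prop]
lemma contDiff_spherePoint {n : WithTop ℕ∞} :
    ContDiff ℝ n (fun p : ℝ × ℝ => spherePoint p.1 p.2) := by
  rw [contDiff_euclidean]
  intro i
  fin_cases i
  · exact (by fun_prop : ContDiff ℝ n fun p : ℝ × ℝ => cos p.1 * cos p.2)
  · exact (by fun_prop : ContDiff ℝ n fun p : ℝ × ℝ => cos p.1 * sin p.2)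
  · exact (by fun_prop : ContDiff ℝ n fun p : ℝ × ℝ => sin p.1)

lemma norm_spherePoint (s t : ℝ) : ‖spherePoint s t‖ = 1 := by
  rw [EuclideanSpace.norm_eq, sqrt_eq_one]
  simp only [spherePoint, norm_eq_abs, sq_abs, Fin.sum_univ_three, Fin.isValue,
    Matrix.cons_val_zero, Matrix.cons_val_one, Matrix.cons_val]
  linear_combination cos s ^ 2 * sin_sq_add_cos_sq t + sin_sq_add_cos_sq s

lemma lintegral_eq_lintegral_spherical {F : E3 → ENNReal} (hF : Measurable F) :
    ∫⁻ y, F y = ∫⁻ t in Ioo (-π) π, ∫⁻ p in polarCoord.target,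
      ENNReal.ofReal p.1 * (ENNReal.ofReal (p.1 * cos p.2) * F (p.1 • spherePoint p.2 t)) := by
  have measurable_F := hF.comp measurePreserving_cylindrical.measurable
  have polar_target : (volume : Measure (ℝ × ℝ)).restrict polarCoord.target =
      (volume.restrict (Ioi 0)).prod (volume.restrict (Ioo (-π) π)) := by
    rw [polarCoord_target, Measure.volume_eq_prod, Measure.prod_restrict]
  calc ∫⁻ y, F y = ∫⁻ q : ℝ × ℝ, ∫⁻ z, F !₂[q.1, q.2, z] := by
        rw [← measurePreserving_cylindrical.lintegral_comp hF, Measure.volume_eq_prod]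
        exact lintegral_prod_symm _ measurable_F.aemeasurable
    _ = ∫⁻ t in Ioo (-π) π, ∫⁻ R in Ioi 0,
          ENNReal.ofReal R * ∫⁻ z, F !₂[R * cos t, R * sin t, z] := by
        rw [← lintegral_comp_polarCoord_symm, polar_target, lintegral_prod_symm _ ?_]
        · rfl
        · have measurable_z : Measurable fun p : ℝ × ℝ =>
              ∫⁻ z, F !₂[p.1 * cos p.2, p.1 * sin p.2, z] :=
            Measurable.lintegral_prod_right <| measurable_F.comp (f := fun a : (ℝ × ℝ) × ℝ =>
              (a.2, a.1.1 * cos a.1.2, a.1.1 * sin a.1.2)) (by fun_prop)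
          exact (Measurable.mul (by fun_prop) measurable_z).aemeasurable
    _ = ∫⁻ t in Ioo (-π) π, ∫⁻ q : ℝ × ℝ,
          ENNReal.ofReal q.1 * F !₂[q.1 * cos t, q.1 * sin t, q.2] := by
        refine lintegral_congr fun t => ?_
        rw [Measure.volume_eq_prod, lintegral_prod _ (by fun_prop),
          setLIntegral_eq_of_support_subset]
        · simp only [lintegral_const_mul' _ _ ENNReal.ofReal_ne_top]
        · exact Function.support_subset_iff'.2 fun R hR => by
            simp [ENNReal.ofReal_of_nonpos (not_lt.1 hR)]
    _ = _ := by
        refine lintegral_congr fun t => ?_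
        rw [← lintegral_comp_polarCoord_symm]
        refine lintegral_congr fun p => ?_
        have point_eq : (!₂[p.1 * cos p.2 * cos t, p.1 * cos p.2 * sin t, p.1 * sin p.2] : E3) =
            p.1 • spherePoint p.2 t := by
          ext i; fin_cases i <;> simp [spherePoint, mul_assoc]
        rw [← point_eq]
        rfl

/-- The region `{y : r ≤ |y|}`. -/
def exterior (r : ℝ) : Set E3 := {y | r ≤ ‖y‖}

lemma measurableSet_exterior (r : ℝ) : MeasurableSet (exterior r) :=
  measurableSet_le measurable_const measurable_norm

/-- Spherical coordinates turned by the isometry `R`; the coordinates of a point are ordered as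
(longitude, radius, latitude). -/
def sphericalChart (R : E3 ≃ₗᵢ[ℝ] E3) (p : ℝ × ℝ × ℝ) : E3 := p.2.1 • R (spherePoint p.2.2 p.1)

/-- A coordinate domain for `sphericalChart`: a patch of the sphere with the equator as one edge,
away from the poles, and all radii beyond `r`. -/
def chartBox (r : ℝ) : Set (ℝ × ℝ × ℝ) := Ioc 0 1 ×ˢ Ioi r ×ˢ Ioc 0 1

lemma measurableSet_chartBox (r : ℝ) : MeasurableSet (chartBox r) :=
  measurableSet_Ioc.prod (measurableSet_Ioi.prod measurableSet_Ioc)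

@[fun_prop]
lemma continuous_sphericalChart (R : E3 ≃ₗᵢ[ℝ] E3) : Continuous (sphericalChart R) := by
  have sphere := (contDiff_spherePoint (n := 0)).continuous
  unfold sphericalChart
  exact (by fun_prop : Continuous fun p : ℝ × ℝ × ℝ => p.2.1).smul <|
    R.continuous.comp <| sphere.comp (f := fun p : ℝ × ℝ × ℝ => (p.2.2, p.1)) (by fun_prop)

lemma norm_sphericalChart (R : E3 ≃ₗᵢ[ℝ] E3) (p : ℝ × ℝ × ℝ) : ‖sphericalChart R p‖ = |p.2.1| := by
  rw [sphericalChart, norm_smul, R.norm_map, norm_spherePoint, mul_one, norm_eq_abs]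

lemma lintegral_chartBox (r : ℝ) {f : ℝ × ℝ × ℝ → ENNReal} (hf : Measurable f) :
    ∫⁻ p in chartBox r, f p =
      ∫⁻ t in Ioc 0 1, ∫⁻ ρ in Ioi r, ∫⁻ s in Ioc 0 1, f (t, ρ, s) := by
  rw [chartBox, Measure.volume_eq_prod, ← Measure.prod_restrict, lintegral_prod _ (by fun_prop),
    Measure.volume_eq_prod, ← Measure.prod_restrict]
  exact lintegral_congr fun t => lintegral_prod _ (by fun_prop)

lemma ofReal_sq_le_jacobian {r ρ s : ℝ} (hr : 0 ≤ r) (hρ : r ≤ ρ) (hs : s ∈ Ioc 0 1) :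
    ENNReal.ofReal (r ^ 2) ≤ 2 * (ENNReal.ofReal ρ * ENNReal.ofReal (ρ * cos s)) := by
  have cos_ge : 1 / 2 ≤ cos s := by nlinarith [one_sub_sq_div_two_le_cos (x := s), hs.1, hs.2]
  rw [← ENNReal.ofReal_mul (hr.trans hρ), ← ENNReal.ofReal_ofNat 2,
    ← ENNReal.ofReal_mul zero_le_two]
  gcongr
  nlinarith [mul_self_nonneg ρ]

lemma sq_mul_lintegral_chartBox_le (R : E3 ≃ₗᵢ[ℝ] E3) {r : ℝ} (hr : 0 ≤ r) {F : E3 → ENNReal}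
    (hF : Measurable F) :
    ENNReal.ofReal (r ^ 2) * ∫⁻ p in chartBox r, F (sphericalChart R p) ≤
      2 * ∫⁻ y in exterior r, F y := by
  set G : E3 → ENNReal := fun y => (exterior r).indicator F (R y)
  have measurable_G : Measurable G :=
    (hF.indicator (measurableSet_exterior r)).comp R.continuous.measurable
  set J : ℝ × ℝ × ℝ → ENNReal := fun p => ENNReal.ofReal p.2.1 *
    (ENNReal.ofReal (p.2.1 * cos p.2.2) * G (p.2.1 • spherePoint p.2.2 p.1))
  have measurable_J : Measurable J := by
    have point : Measurable fun p : ℝ × ℝ × ℝ => p.2.1 • spherePoint p.2.2 p.1 :=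
      (continuous_sphericalChart (.refl ℝ E3)).measurable
    exact Measurable.mul (by fun_prop) (Measurable.mul (by fun_prop) (measurable_G.comp point))
  have box_subset : Ioi r ×ˢ Ioc (0 : ℝ) 1 ⊆ polarCoord.target :=
    prod_mono (Ioi_subset_Ioi hr)
      fun s hs => ⟨by linarith [hs.1, pi_pos], by linarith [hs.2, pi_gt_three]⟩
  have integrand_le (p) (hp : p ∈ chartBox r) :
      ENNReal.ofReal (r ^ 2) * F (sphericalChart R p) ≤ 2 * J p := by
    obtain ⟨-, hρ : r < p.2.1, hs⟩ := hp
    have mem : sphericalChart R p ∈ exterior r := by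
      simpa only [exterior, mem_ofPred_eq, norm_sphericalChart] using hρ.le.trans (le_abs_self _)
    have G_eq : G (p.2.1 • spherePoint p.2.2 p.1) = F (sphericalChart R p) := by
      simp only [G, map_smul]
      exact indicator_of_mem mem F
    simp only [J, G_eq, ← mul_assoc]
    rw [mul_assoc 2]
    gcongr
    exact ofReal_sq_le_jacobian hr hρ.le hs
  calc ENNReal.ofReal (r ^ 2) * ∫⁻ p in chartBox r, F (sphericalChart R p)
      ≤ 2 * ∫⁻ p in chartBox r, J p := by
        simp only [← lintegral_const_mul' _ _ ENNReal.ofReal_ne_top,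
          ← lintegral_const_mul' _ _ ENNReal.ofNat_ne_top]
        exact setLIntegral_mono' (measurableSet_chartBox r) integrand_le
    _ ≤ 2 * ∫⁻ y, G y := by
        rw [lintegral_eq_lintegral_spherical measurable_G, chartBox, Measure.volume_eq_prod,
          ← Measure.prod_restrict, lintegral_prod _ measurable_J.aemeasurable]
        gcongr
        exact fun t ht => ⟨by linarith [ht.1, pi_pos], by linarith [ht.2, pi_gt_three]⟩
    _ = 2 * ∫⁻ y in exterior r, F y := by
        rw [R.measurePreserving.lintegral_comp (hF.indicator (measurableSet_exterior r)),
          lintegral_indicator (measurableSet_exterior r)]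

end Spherical

section Angular
open Set Real

lemma fderiv_eq_sum_mul_pd (g : E3 → ℝ) (y τ : E3) : fderiv ℝ g y τ = ∑ k, τ k * pd k g y := by
  have expand : τ = ∑ k, τ k • EuclideanSpace.single k (1 : ℝ) := by
    simpa using ((EuclideanSpace.basisFun (Fin 3) ℝ).sum_repr τ).symm
  conv_lhs => rw [expand]
  simp only [map_sum, map_smul, smul_eq_mul, pd]

/-- The radial derivative `∂_ρ g` of a scalar function. -/
def radialDeriv (g : E3 → ℝ) (y : E3) : ℝ := ∑ k, (y k / ‖y‖) * pd k g y

lemma radialDeriv_eq_fderiv (g : E3 → ℝ) (y : E3) :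
    radialDeriv g y = fderiv ℝ g y (‖y‖⁻¹ • y) := by
  simp only [radialDeriv, fderiv_eq_sum_mul_pd, PiLp.smul_apply, smul_eq_mul, div_eq_inv_mul]

/-- The pointwise energy `|g|² + ∑ᵢ |Ωᵢ g|²`. -/
def angEnergy (g : E3 → ℝ) (y : E3) : ENNReal := ‖g y‖ₑ ^ 2 + ∑ i, ‖angOp i g y‖ₑ ^ 2

/-- For `y ⊥ τ`, Lagrange's identity `(y × τ) · (y × ∇g) = |y|² τ · ∇g` expresses the derivative
along `τ` through the `Ωᵢ g`. -/
lemma norm_mul_fderiv_sq_le (g : E3 → ℝ) {y τ : E3} (h : inner ℝ y τ = 0) :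
    (‖y‖ * fderiv ℝ g y τ) ^ 2 ≤ ‖τ‖ ^ 2 * ∑ i, angOp i g y ^ 2 := by
  rcases eq_or_ne y 0 with rfl | hy
  · simpa using by positivity
  set m : Fin 3 → ℝ := fun i => y (i + 1) * τ (i + 2) - y (i + 2) * τ (i + 1)
  simp only [PiLp.inner_apply, Fin.sum_univ_three, RCLike.inner_apply, conj_trivial] at h
  have lagrange : ‖y‖ ^ 2 * fderiv ℝ g y τ = ∑ i, m i * angOp i g y := by
    simp only [fderiv_eq_sum_mul_pd, EuclideanSpace.real_norm_sq_eq, Fin.sum_univ_three,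
      Fin.isValue, zero_add, Fin.reduceAdd, m, angOp]
    linear_combination (y 0 * pd 0 g y + y 1 * pd 1 g y + y 2 * pd 2 g y) * h
  have norm_m : ∑ i, m i ^ 2 = ‖y‖ ^ 2 * ‖τ‖ ^ 2 := by
    simp only [EuclideanSpace.real_norm_sq_eq, Fin.sum_univ_three, Fin.isValue, zero_add,
      Fin.reduceAdd, m]
    linear_combination -(τ 0 * y 0 + τ 1 * y 1 + τ 2 * y 2) * h
  refine le_of_mul_le_mul_left ?_ (by positivity : 0 < ‖y‖ ^ 2)
  calc ‖y‖ ^ 2 * (‖y‖ * fderiv ℝ g y τ) ^ 2 = (‖y‖ ^ 2 * fderiv ℝ g y τ) ^ 2 := by ring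
    _ ≤ (∑ i, m i ^ 2) * ∑ i, angOp i g y ^ 2 := by
        rw [lagrange]
        exact Finset.sum_mul_sq_le_sq_mul_sq _ _ _
    _ = ‖y‖ ^ 2 * (‖τ‖ ^ 2 * ∑ i, angOp i g y ^ 2) := by rw [norm_m, mul_assoc]

lemma exists_hasDerivAt_spherePoint (s c d : ℝ) :
    ∃ v : E3, HasDerivAt (fun s => spherePoint s (c + d * s)) v s ∧
      inner ℝ (spherePoint s (c + d * s)) v = 0 ∧ ‖v‖ ^ 2 ≤ 1 + d ^ 2 := by
  set t := c + d * s
  have dt : HasDerivAt (fun s => c + d * s) d s := (hasDerivAt_const_mul d).const_add c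
  refine ⟨!₂[-sin s * cos t + cos s * (-sin t * d), -sin s * sin t + cos s * (cos t * d), cos s],
    ?_, ?_, ?_⟩
  · refine (EuclideanSpace.equiv (Fin 3) ℝ).symm.hasFDerivAt.comp_hasDerivAt s
      (hasDerivAt_pi.2 fun i => ?_)
    fin_cases i
    · exact (hasDerivAt_cos s).mul dt.cos
    · exact (hasDerivAt_cos s).mul dt.sin
    · exact hasDerivAt_sin s
  · simp only [PiLp.inner_apply, RCLike.inner_apply, conj_trivial, Fin.sum_univ_three, spherePoint,
      Fin.isValue, Matrix.cons_val_zero, Matrix.cons_val_one, Matrix.cons_val]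
    linear_combination -(cos s * sin s) * sin_sq_add_cos_sq t
  · simp only [EuclideanSpace.real_norm_sq_eq, Fin.sum_univ_three, Fin.isValue,
      Matrix.cons_val_zero, Matrix.cons_val_one, Matrix.cons_val]
    have speed : (-sin s * cos t + cos s * (-sin t * d)) ^ 2 +
        (-sin s * sin t + cos s * (cos t * d)) ^ 2 + cos s ^ 2 = 1 + d ^ 2 * cos s ^ 2 := by
      linear_combination (sin s ^ 2 + cos s ^ 2 * d ^ 2) * sin_sq_add_cos_sq t +
        sin_sq_add_cos_sq s
    rw [speed]
    gcongr
    exact mul_le_of_le_one_right (sq_nonneg d) (cos_sq_le_one s)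

variable (R : E3 ≃ₗᵢ[ℝ] E3) {g : E3 → ℝ}

lemma contDiff_comp_sphericalChart (hg : ContDiff ℝ 1 g) (ρ c d : ℝ) :
    ContDiff ℝ 1 fun s => g (sphericalChart R (c + d * s, ρ, s)) := by
  have sphere := (contDiff_spherePoint (n := 1)).comp
    (f := fun s : ℝ => (s, c + d * s)) (by fun_prop)
  exact hg.comp ((R.contDiff.comp sphere).const_smul ρ)

lemma enorm_sq_add_enorm_deriv_sq_le (hg : Differentiable ℝ g) (ρ s c : ℝ) {d : ℝ}
    (hd : d ^ 2 ≤ 1) :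
    ‖g (sphericalChart R (c + d * s, ρ, s))‖ₑ ^ 2 +
        ‖deriv (fun s => g (sphericalChart R (c + d * s, ρ, s))) s‖ₑ ^ 2 ≤
      2 * angEnergy g (sphericalChart R (c + d * s, ρ, s)) := by
  obtain ⟨v, hv, orthogonal, norm_v⟩ := exists_hasDerivAt_spherePoint s c d
  set y := sphericalChart R (c + d * s, ρ, s)
  have chain : HasDerivAt (fun s => g (sphericalChart R (c + d * s, ρ, s)))
      (fderiv ℝ g y (ρ • R v)) s :=
    (hg y).hasFDerivAt.comp_hasDerivAt s
      ((R.toContinuousLinearEquiv.hasFDerivAt.comp_hasDerivAt s hv).const_smul ρ)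
  have deriv_sq : deriv (fun s => g (sphericalChart R (c + d * s, ρ, s))) s ^ 2 ≤
      2 * ∑ i, angOp i g y ^ 2 := by
    calc _ = (‖y‖ * fderiv ℝ g y (R v)) ^ 2 := by
          rw [chain.deriv, map_smul, smul_eq_mul, mul_pow, mul_pow, norm_sphericalChart, sq_abs]
      _ ≤ ‖R v‖ ^ 2 * ∑ i, angOp i g y ^ 2 := norm_mul_fderiv_sq_le g <| by
          rw [show y = ρ • R (spherePoint s (c + d * s)) from rfl, real_inner_smul_left,
            R.inner_map_map, orthogonal, mul_zero]
      _ ≤ 2 * ∑ i, angOp i g y ^ 2 := by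
          rw [R.norm_map]
          gcongr
          linarith
  have deriv_enorm_sq : ‖deriv (fun s => g (sphericalChart R (c + d * s, ρ, s))) s‖ₑ ^ 2 ≤
      2 * ∑ i, ‖angOp i g y‖ₑ ^ 2 := by
    simp only [← enorm_pow, Real.enorm_of_nonneg (sq_nonneg _)]
    rw [← ENNReal.ofReal_sum_of_nonneg fun _ _ => sq_nonneg _, ← ENNReal.ofReal_ofNat 2,
      ← ENNReal.ofReal_mul zero_le_two]
    exact ENNReal.ofReal_le_ofReal deriv_sq
  rw [angEnergy, mul_add]
  exact add_le_add (le_mul_of_one_le_left' one_le_two) deriv_enorm_sq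

lemma hasDerivAt_comp_smul (hg : Differentiable ℝ g) {ω : E3} (hω : ‖ω‖ = 1) {ρ : ℝ} (hρ : 0 < ρ) :
    HasDerivAt (fun ρ : ℝ => g (ρ • ω)) (radialDeriv g (ρ • ω)) ρ := by
  have ray : HasDerivAt (fun ρ : ℝ => ρ • ω) ω ρ := by
    simpa using (hasDerivAt_id ρ).smul_const ω
  have direction : ‖ρ • ω‖⁻¹ • ρ • ω = ω := by
    rw [norm_smul, hω, mul_one, norm_of_nonneg hρ.le, inv_smul_smul₀ hρ.ne']
  rw [radialDeriv_eq_fderiv, direction]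
  exact (hg (ρ • ω)).hasFDerivAt.comp_hasDerivAt ρ ray

end Angular

section Regularity

variable {g : E3 → ℝ}

lemma contDiff_pd {n : WithTop ℕ∞} (hg : ContDiff ℝ (n + 1) g) (k : Fin 3) :
    ContDiff ℝ n (pd k g) :=
  (hg.fderiv_right le_rfl).clm_apply contDiff_const

lemma contDiff_angOp {n : WithTop ℕ∞} (hg : ContDiff ℝ (n + 1) g) (i : Fin 3) :
    ContDiff ℝ n (angOp i g) := by
  have := contDiff_pd hg
  unfold angOp
  fun_prop

lemma hasCompactSupport_angOp (hc : HasCompactSupport g) (i : Fin 3) :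
    HasCompactSupport (angOp i g) :=
  (hc.fderiv ℝ).mono fun y hy hz => hy <| by simp [angOp, pd, hz]

lemma measurable_angEnergy (hg : ContDiff ℝ 1 g) : Measurable (angEnergy g) := by
  have measurable_angOp (i) : Measurable (angOp i g) :=
    (contDiff_angOp hg i (n := 0)).continuous.measurable
  have measurable_g := hg.continuous.measurable
  unfold angEnergy
  fun_prop

lemma measurable_radialDeriv (hg : ContDiff ℝ 1 g) : Measurable (radialDeriv g) := by
  have measurable_pd (k) : Measurable (pd k g) := (contDiff_pd hg k (n := 0)).continuous.measurable
  unfold radialDeriv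
  fun_prop

end Regularity

section ScalarInequality
open Set

lemma exists_sphericalChart_eq (x : E3) :
    ∃ R : E3 ≃ₗᵢ[ℝ] E3, sphericalChart R (0, ‖x‖, 0) = x := by
  have norm_eq : ‖‖x‖ • spherePoint 0 0‖ = ‖x‖ := by
    rw [norm_smul, norm_norm, norm_spherePoint, mul_one]
  exact ⟨(ℝ ∙ (‖x‖ • spherePoint 0 0 - x))ᗮ.reflection,
    (map_smul _ _ _).symm.trans (Submodule.reflection_sub norm_eq)⟩

/-- The integral of `F` over a patch of the sphere `|y| = r`, with a weight in the latitude `s`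
that is singular on the equator. -/
def weightedPatchIntegral (R : E3 ≃ₗᵢ[ℝ] E3) (r : ℝ) (F : E3 → ENNReal) : ENNReal :=
  ∫⁻ t in Ioc 0 1, ∫⁻ s in Ioc 0 1,
    ENNReal.ofReal s ^ (-1 / 4 : ℝ) * F (sphericalChart R (t, r, s))

variable (R : E3 ≃ₗᵢ[ℝ] E3) {g : E3 → ℝ}

/-- The substitution `t = θ s` costs a factor `s`, which turns the weight `s ^ (3 / 4)` into
`s ^ (-1 / 4)`. -/
lemma lintegral_fan_le (r : ℝ) {F : E3 → ENNReal} (hF : Measurable F) :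
    ∫⁻ θ in Ioc 0 1, ∫⁻ s in Ioc 0 1,
        ENNReal.ofReal s ^ (3 / 4 : ℝ) * F (sphericalChart R (θ * s, r, s)) ≤
      weightedPatchIntegral R r F := by
  have along_latitude (s : ℝ) (hs : s ∈ Ioc 0 1) :
      ∫⁻ θ in Ioc 0 1, ENNReal.ofReal s ^ (3 / 4 : ℝ) * F (sphericalChart R (θ * s, r, s)) ≤
        ∫⁻ t in Ioc 0 1, ENNReal.ofReal s ^ (-1 / 4 : ℝ) * F (sphericalChart R (t, r, s)) := by
    have weight : ENNReal.ofReal s ^ (3 / 4 : ℝ) =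
        ENNReal.ofReal s ^ (-1 / 4 : ℝ) * ENNReal.ofReal s := by
      nth_rw 3 [← ENNReal.rpow_one (ENNReal.ofReal s)]
      rw [← ENNReal.rpow_add _ _ (by simpa using hs.1) ENNReal.ofReal_ne_top]
      norm_num
    have weight_ne_top : ENNReal.ofReal s ^ (-1 / 4 : ℝ) ≠ ⊤ :=
      ENNReal.rpow_ne_top_of_ne_zero (by simpa using hs.1) ENNReal.ofReal_ne_top
    simp only [weight, mul_assoc, lintegral_const_mul' _ _ weight_ne_top,
      lintegral_const_mul' _ _ ENNReal.ofReal_ne_top]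
    gcongr
    simpa only [mul_comm s] using
      mul_lintegral_Ioc_comp_mul_le hs.1 hs.2 fun t => F (sphericalChart R (t, r, s))
  rw [lintegral_lintegral_swap (by fun_prop)]
  exact (setLIntegral_mono' measurableSet_Ioc along_latitude).trans_eq
    (lintegral_lintegral_swap (by fun_prop))

lemma enorm_sq_le_weightedPatchIntegral (r : ℝ) (hg : ContDiff ℝ 1 g) :
    ‖g (sphericalChart R (0, r, 0))‖ₑ ^ 2 ≤ 16 * weightedPatchIntegral R r (angEnergy g) := by
  have along_ray (θ : ℝ) (hθ : θ ∈ Ioc 0 1) : ‖g (sphericalChart R (0, r, 0))‖ₑ ^ 2 ≤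
      16 * ∫⁻ s in Ioc 0 1,
        ENNReal.ofReal s ^ (3 / 4 : ℝ) * angEnergy g (sphericalChart R (θ * s, r, s)) := by
    have sobolev := enorm_sq_le_lintegral_Ioc (contDiff_comp_sphericalChart R hg r 0 θ)
      (by norm_num : (3 / 4 : ℝ) < 1) (left_mem_Icc.2 zero_le_one)
    have energy (s : ℝ) := enorm_sq_add_enorm_deriv_sq_le R (hg.differentiable one_ne_zero) r s 0
      (by nlinarith [hθ.1, hθ.2] : θ ^ 2 ≤ 1)
    simp only [mul_zero, zero_add] at sobolev energy
    calc ‖g (sphericalChart R (0, r, 0))‖ₑ ^ 2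
        ≤ 2 * ENNReal.ofReal (1 - 3 / 4)⁻¹ * ∫⁻ s in Ioc 0 1, ENNReal.ofReal s ^ (3 / 4 : ℝ) *
            (2 * angEnergy g (sphericalChart R (θ * s, r, s))) :=
          sobolev.trans (by gcongr with s; exact energy s)
      _ = _ := by
          simp only [mul_left_comm _ (2 : ENNReal),
            lintegral_const_mul' _ _ ENNReal.ofNat_ne_top]
          rw [show (1 - 3 / 4 : ℝ)⁻¹ = 4 by norm_num, ENNReal.ofReal_ofNat, ← mul_assoc]
          norm_num
  calc ‖g (sphericalChart R (0, r, 0))‖ₑ ^ 2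
      = ∫⁻ _ in Ioc (0 : ℝ) 1, ‖g (sphericalChart R (0, r, 0))‖ₑ ^ 2 := by simp
    _ ≤ 16 * ∫⁻ θ in Ioc 0 1, ∫⁻ s in Ioc 0 1,
          ENNReal.ofReal s ^ (3 / 4 : ℝ) * angEnergy g (sphericalChart R (θ * s, r, s)) := by
        rw [← lintegral_const_mul' _ _ ENNReal.ofNat_ne_top]
        exact setLIntegral_mono' measurableSet_Ioc along_ray
    _ ≤ 16 * weightedPatchIntegral R r (angEnergy g) := by
        gcongr
        exact lintegral_fan_le R r (measurable_angEnergy hg)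

lemma enorm_sq_le_lintegral_ray (hg : ContDiff ℝ 1 g) (hc : HasCompactSupport g) {r : ℝ}
    (hr : 0 ≤ r) {ω : E3} (hω : ‖ω‖ = 1) :
    ‖g (r • ω)‖ₑ ^ 2 ≤ 2 * ∫⁻ ρ in Ioi r, ‖g (ρ • ω)‖ₑ * ‖radialDeriv g (ρ • ω)‖ₑ := by
  have hω0 : ω ≠ 0 := norm_ne_zero_iff.1 (hω ▸ one_ne_zero)
  have compact_ray : HasCompactSupport fun ρ : ℝ => g (ρ • ω) :=
    hc.comp_isClosedEmbedding (isClosedEmbedding_smul_left hω0)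
  have contDiff_ray : ContDiff ℝ 1 fun ρ : ℝ => g (ρ • ω) := by fun_prop
  refine (enorm_sq_le_lintegral_Ioi contDiff_ray compact_ray r).trans_eq ?_
  congr 1
  refine setLIntegral_congr_fun measurableSet_Ioi fun ρ hρ => ?_
  have ray_deriv := hasDerivAt_comp_smul (hg.differentiable one_ne_zero) hω (hr.trans_lt hρ)
  simp only [ray_deriv.deriv]

end ScalarInequality

section Trace
open Set

variable (R : E3 ≃ₗᵢ[ℝ] E3) {h : E3 → ℝ}

lemma lintegral_chartBox_rpow_mul_enorm_sq_le (hh : ContDiff ℝ 1 h) (r : ℝ) :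
    ∫⁻ p in chartBox r, ENNReal.ofReal p.2.2 ^ (-1 / 2 : ℝ) * ‖h (sphericalChart R p)‖ₑ ^ 2 ≤
      8 * ∫⁻ p in chartBox r, angEnergy h (sphericalChart R p) := by
  have measurable_h : Measurable h := hh.continuous.measurable
  have measurable_energy := measurable_angEnergy hh
  have along_meridian (t ρ : ℝ) :
      ∫⁻ s in Ioc (0 : ℝ) 1, ENNReal.ofReal s ^ (-1 / 2 : ℝ) * ‖h (sphericalChart R (t, ρ, s))‖ₑ ^ 2
        ≤ ∫⁻ s in Ioc 0 1, 8 * angEnergy h (sphericalChart R (t, ρ, s)) := by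
    have hardy := lintegral_Ioc_rpow_mul_enorm_sq_le (contDiff_comp_sphericalChart R hh ρ t 0)
      (by norm_num : -1 < (-1 / 2 : ℝ))
    have energy (s : ℝ) := enorm_sq_add_enorm_deriv_sq_le R (hh.differentiable one_ne_zero) ρ s t
      (by norm_num : (0 : ℝ) ^ 2 ≤ 1)
    simp only [zero_mul, add_zero] at hardy energy
    calc _ ≤ 2 * ENNReal.ofReal (-1 / 2 + 1)⁻¹ *
            ∫⁻ s in Ioc 0 1, 2 * angEnergy h (sphericalChart R (t, ρ, s)) :=
          hardy.trans (by gcongr with s; exact energy s)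
      _ = _ := by
          rw [show (-1 / 2 + 1 : ℝ)⁻¹ = 2 by norm_num, ENNReal.ofReal_ofNat]
          simp only [lintegral_const_mul' _ _ ENNReal.ofNat_ne_top, ← mul_assoc]
          norm_num
  rw [← lintegral_const_mul' _ _ ENNReal.ofNat_ne_top, lintegral_chartBox r (by fun_prop),
    lintegral_chartBox r (by fun_prop)]
  exact lintegral_mono fun t => lintegral_mono fun ρ => along_meridian t ρ

lemma weightedPatchIntegral_le_lintegral_chartBox (hh : ContDiff ℝ 1 h) (hc : HasCompactSupport h)
    {r : ℝ} (hr : 0 ≤ r) :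
    weightedPatchIntegral R r (fun y => ‖h y‖ₑ ^ 2) ≤ 2 * ∫⁻ p in chartBox r,
      ENNReal.ofReal p.2.2 ^ (-1 / 4 : ℝ) * ‖h (sphericalChart R p)‖ₑ *
        ‖radialDeriv h (sphericalChart R p)‖ₑ := by
  have measurable_h : Measurable h := hh.continuous.measurable
  have measurable_radial := measurable_radialDeriv hh
  set f : ℝ × ℝ × ℝ → ENNReal := fun p => ENNReal.ofReal p.2.2 ^ (-1 / 4 : ℝ) *
    ‖h (sphericalChart R p)‖ₑ * ‖radialDeriv h (sphericalChart R p)‖ₑ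
  have measurable_f : Measurable f := by fun_prop
  have along_ray (t s : ℝ) (hs : s ∈ Ioc 0 1) :
      ENNReal.ofReal s ^ (-1 / 4 : ℝ) * ‖h (sphericalChart R (t, r, s))‖ₑ ^ 2 ≤
        2 * ∫⁻ ρ in Ioi r, f (t, ρ, s) := by
    have weight_ne_top : ENNReal.ofReal s ^ (-1 / 4 : ℝ) ≠ ⊤ :=
      ENNReal.rpow_ne_top_of_ne_zero (by simpa using hs.1) ENNReal.ofReal_ne_top
    have ray := enorm_sq_le_lintegral_ray hh hc hr
      ((R.norm_map _).trans (norm_spherePoint s t))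
    simp only [f, mul_assoc, lintegral_const_mul' _ _ weight_ne_top]
    rw [mul_left_comm]
    exact mul_le_mul_right ray _
  calc weightedPatchIntegral R r (fun y => ‖h y‖ₑ ^ 2)
      ≤ ∫⁻ t in Ioc 0 1, ∫⁻ s in Ioc 0 1, 2 * ∫⁻ ρ in Ioi r, f (t, ρ, s) :=
        lintegral_mono fun t => setLIntegral_mono' measurableSet_Ioc (along_ray t)
    _ = 2 * ∫⁻ t in Ioc 0 1, ∫⁻ ρ in Ioi r, ∫⁻ s in Ioc 0 1, f (t, ρ, s) := by
        simp only [lintegral_const_mul' _ _ ENNReal.ofNat_ne_top]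
        congr 1
        exact lintegral_congr fun t => lintegral_lintegral_swap (by fun_prop)
    _ = _ := by rw [lintegral_chartBox r measurable_f]

lemma sq_weightedPatchIntegral_le (hh : ContDiff ℝ 1 h) (hc : HasCompactSupport h) {r : ℝ}
    (hr : 0 ≤ r) :
    (ENNReal.ofReal (r ^ 2) * weightedPatchIntegral R r (fun y => ‖h y‖ₑ ^ 2)) ^ 2 ≤
      128 * ((∫⁻ y in exterior r, ‖radialDeriv h y‖ₑ ^ 2) * ∫⁻ y in exterior r, angEnergy h y) := by
  have measurable_radial := measurable_radialDeriv hh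
  have weight_sq (s : ℝ) : (ENNReal.ofReal s ^ (-1 / 4 : ℝ)) ^ 2 =
      ENNReal.ofReal s ^ (-1 / 2 : ℝ) := by
    rw [← ENNReal.rpow_mul_natCast]
    norm_num
  have cauchy_schwarz := lintegral_mul_sq_le (μ := volume.restrict (chartBox r))
    (f := fun p => ENNReal.ofReal p.2.2 ^ (-1 / 4 : ℝ) * ‖h (sphericalChart R p)‖ₑ)
    (g := fun p => ‖radialDeriv h (sphericalChart R p)‖ₑ) (by fun_prop) (by fun_prop)
  simp only [mul_pow, weight_sq] at cauchy_schwarz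
  set K := ENNReal.ofReal (r ^ 2)
  calc (K * weightedPatchIntegral R r fun y => ‖h y‖ₑ ^ 2) ^ 2
      ≤ (K * (2 * ∫⁻ p in chartBox r, ENNReal.ofReal p.2.2 ^ (-1 / 4 : ℝ) *
          ‖h (sphericalChart R p)‖ₑ * ‖radialDeriv h (sphericalChart R p)‖ₑ)) ^ 2 := by
        gcongr
        exact weightedPatchIntegral_le_lintegral_chartBox R hh hc hr
    _ ≤ K ^ 2 * (2 ^ 2 * ((8 * ∫⁻ p in chartBox r, angEnergy h (sphericalChart R p)) *
          ∫⁻ p in chartBox r, ‖radialDeriv h (sphericalChart R p)‖ₑ ^ 2)) := by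
        rw [mul_pow, mul_pow]
        gcongr
        exact cauchy_schwarz.trans
          (mul_le_mul_left (lintegral_chartBox_rpow_mul_enorm_sq_le R hh r) _)
    _ = 32 * ((K * ∫⁻ p in chartBox r, ‖radialDeriv h (sphericalChart R p)‖ₑ ^ 2) *
          (K * ∫⁻ p in chartBox r, angEnergy h (sphericalChart R p))) := by ring
    _ ≤ 32 * ((2 * ∫⁻ y in exterior r, ‖radialDeriv h y‖ₑ ^ 2) *
          (2 * ∫⁻ y in exterior r, angEnergy h y)) := by
        gcongr 32 * (?_ * ?_)
        · exact sq_mul_lintegral_chartBox_le R hr (by fun_prop)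
        · exact sq_mul_lintegral_chartBox_le R hr (measurable_angEnergy hh)
    _ = _ := by ring

end Trace

section ScalarSobolev
open Set

/-- The pointwise energy of the radial derivatives of `g` and of the `Ωᵢ g`. -/
def radialEnergy (g : E3 → ℝ) (y : E3) : ENNReal :=
  ‖radialDeriv g y‖ₑ ^ 2 + ∑ i, ‖radialDeriv (angOp i g) y‖ₑ ^ 2

/-- The pointwise energy of order two: `angEnergy` of `g` and of the `Ωᵢ g`. -/
def angEnergyTwo (g : E3 → ℝ) (y : E3) : ENNReal := angEnergy g y + ∑ i, angEnergy (angOp i g) y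

lemma weightedPatchIntegral_sum {ι : Type*} [Fintype ι] (R : E3 ≃ₗᵢ[ℝ] E3) (r : ℝ)
    {F : ι → E3 → ENNReal} (hF : ∀ i, Measurable (F i)) :
    weightedPatchIntegral R r (fun y => ∑ i, F i y) = ∑ i, weightedPatchIntegral R r (F i) := by
  simp only [weightedPatchIntegral, Finset.mul_sum]
  rw [← lintegral_finsetSum _ fun i _ => by fun_prop]
  exact lintegral_congr fun t => lintegral_finsetSum _ fun i _ => by fun_prop

/-- The functions whose squares add up to `angEnergy g`, indexed by the multi-indices of order at
most one. -/
def angFamily (g : E3 → ℝ) (o : Option (Fin 3)) : E3 → ℝ := o.elim g (angOp · g)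

lemma sq_mul_enorm_sq_le {g : E3 → ℝ} (hg : ContDiff ℝ 2 g) (hc : HasCompactSupport g) (x : E3) :
    (ENNReal.ofReal (‖x‖ ^ 2) * ‖g x‖ₑ ^ 2) ^ 2 ≤
      2 ^ 15 * (∫⁻ y in exterior ‖x‖, radialEnergy g y) *
        ∫⁻ y in exterior ‖x‖, angEnergyTwo g y := by
  obtain ⟨R, hR⟩ := exists_sphericalChart_eq x
  have hg1 : ContDiff ℝ 1 g := hg.of_le one_le_two
  have contDiff_family (o) : ContDiff ℝ 1 (angFamily g o) :=
    o.rec hg1 (contDiff_angOp hg)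
  have support_family (o) : HasCompactSupport (angFamily g o) :=
    o.rec hc (hasCompactSupport_angOp hc)
  have measurable_family (o) : Measurable (angFamily g o) :=
    (contDiff_family o).continuous.measurable
  have measurable_radial (o) := measurable_radialDeriv (contDiff_family o)
  set K := ENNReal.ofReal (‖x‖ ^ 2)
  have energy_eq : angEnergy g = fun y => ∑ o, ‖angFamily g o y‖ₑ ^ 2 :=
    funext fun y => (Fintype.sum_option fun o => ‖angFamily g o y‖ₑ ^ 2).symm
  have pointwise := enorm_sq_le_weightedPatchIntegral R ‖x‖ hg1
  rw [hR, energy_eq, weightedPatchIntegral_sum R _ (by fun_prop)] at pointwise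
  have traces := sum_sq_le_sum_mul_sum Finset.univ fun o _ =>
    (sq_weightedPatchIntegral_le R (contDiff_family o) (support_family o)
      (norm_nonneg x)).trans_eq (mul_assoc _ _ _).symm
  rw [← Finset.mul_sum, ← Finset.mul_sum, ← lintegral_finsetSum _ (by fun_prop),
    ← lintegral_finsetSum _ (fun o _ => measurable_angEnergy (contDiff_family o))] at traces
  calc (K * ‖g x‖ₑ ^ 2) ^ 2
      ≤ (K * (16 * ∑ o, weightedPatchIntegral R ‖x‖ fun y => ‖angFamily g o y‖ₑ ^ 2)) ^ 2 := by
        gcongr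
    _ = 2 ^ 8 * (K * ∑ o, weightedPatchIntegral R ‖x‖ fun y => ‖angFamily g o y‖ₑ ^ 2) ^ 2 := by
        ring
    _ ≤ _ := mul_le_mul_right traces _
    _ = _ := by
        simp only [Fintype.sum_option, radialEnergy, angEnergyTwo, angFamily, Option.elim]
        ring

end ScalarSobolev

section VectorFields

lemma sum_Vmat_mulVec_sq_le (i : Fin 3) (b : Fin 3 → ℝ) :
    ∑ j, (∑ k, Vmat i j k * b k) ^ 2 ≤ ∑ j, b j ^ 2 := by
  fin_cases i <;> simp [Fin.sum_univ_three, Vmat] <;>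
    linarith [sq_nonneg (b 0), sq_nonneg (b 1), sq_nonneg (b 2)]

lemma sum_enorm_sq_eq_ofReal (c : Fin 3 → ℝ) :
    ∑ j, ‖c j‖ₑ ^ 2 = ENNReal.ofReal (∑ j, c j ^ 2) := by
  rw [ENNReal.ofReal_sum_of_nonneg fun _ _ => sq_nonneg _]
  simp only [← enorm_pow, Real.enorm_of_nonneg (sq_nonneg _)]

lemma sum_enorm_sub_Vmat_sq_le (i : Fin 3) (a b : Fin 3 → ℝ) :
    ∑ j, ‖a j - ∑ k, Vmat i j k * b k‖ₑ ^ 2 ≤ 2 * ∑ j, ‖a j‖ₑ ^ 2 + 2 * ∑ j, ‖b j‖ₑ ^ 2 := by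
  have rotation_le : ∑ j, ‖∑ k, Vmat i j k * b k‖ₑ ^ 2 ≤ ∑ j, ‖b j‖ₑ ^ 2 := by
    rw [sum_enorm_sq_eq_ofReal fun j => ∑ k, Vmat i j k * b k, sum_enorm_sq_eq_ofReal b]
    exact ENNReal.ofReal_le_ofReal (sum_Vmat_mulVec_sq_le i b)
  calc ∑ j, ‖a j - ∑ k, Vmat i j k * b k‖ₑ ^ 2
      ≤ ∑ j, 2 * (‖a j‖ₑ ^ 2 + ‖∑ k, Vmat i j k * b k‖ₑ ^ 2) :=
        Finset.sum_le_sum fun j _ =>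
          (pow_le_pow_left' enorm_sub_le 2).trans (add_sq_le_two_mul _ _)
    _ ≤ _ := by
        rw [← Finset.mul_sum, Finset.sum_add_distrib, mul_add]
        exact add_le_add_right (mul_le_mul_right rotation_le 2) _

lemma add_sum_le_seven_mul {a : ENNReal} {b c : Fin 3 → ENNReal}
    (h : ∀ i, b i ≤ 2 * c i + 2 * a) : a + ∑ i, b i ≤ 7 * (a + ∑ i, c i) := by
  calc a + ∑ i, b i ≤ a + ∑ i, (2 * c i + 2 * a) := by gcongr with i; exact h i
    _ = 7 * a + 2 * ∑ i, c i := by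
        rw [Finset.sum_add_distrib, ← Finset.mul_sum, Fin.sum_const, nsmul_eq_mul]
        push_cast
        ring
    _ ≤ 7 * (a + ∑ i, c i) := by
        rw [mul_add]
        gcongr
        norm_num

variable {v : VF3}

lemma hasCompactSupport_apply (hc : HasCompactSupport v) (j : Fin 3) :
    HasCompactSupport fun y => v y j :=
  hc.comp_left (g := fun w : Fin 3 → ℝ => w j) rfl

lemma contDiff_omtV {n : WithTop ℕ∞} (hv : ContDiff ℝ (n + 1) v) (i : Fin 3) :
    ContDiff ℝ n (omtV i v) :=
  contDiff_pi.2 fun j => (contDiff_angOp (contDiff_pi.1 hv j) i).add <|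
    .sum fun k _ => contDiff_const.mul (contDiff_pi.1 (hv.of_le le_self_add) k)

lemma hasCompactSupport_omtV (hc : HasCompactSupport v) (i : Fin 3) :
    HasCompactSupport (omtV i v) := by
  refine .intro hc.isCompact fun y hy => funext fun j => ?_
  have v_eq : v y = 0 := image_eq_zero_of_notMem_tsupport hy
  have fderiv_eq : fderiv ℝ (fun y => v y j) y = 0 := by
    have near_zero : (fun y => v y j) =ᶠ[nhds y] fun _ => 0 :=
      (notMem_tsupport_iff_eventuallyEq.1 hy).fun_comp (· j)
    rw [near_zero.fderiv_eq, fderiv_fun_const, Pi.zero_apply]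
  simp [omtV, angOp, pd, v_eq, fderiv_eq]

lemma angOp_apply_eq (v : VF3) (i j : Fin 3) :
    (angOp i fun y => v y j) = fun y => omtV i v y j - ∑ k, Vmat i j k * v y k := by
  simp only [omtV, add_sub_cancel_right]

lemma sum_enorm_angOp_sq_le (v : VF3) (i : Fin 3) (y : E3) :
    ∑ j, ‖angOp i (fun y => v y j) y‖ₑ ^ 2 ≤
      2 * ∑ j, ‖omtV i v y j‖ₑ ^ 2 + 2 * ∑ j, ‖v y j‖ₑ ^ 2 := by
  simpa only [angOp_apply_eq] using sum_enorm_sub_Vmat_sq_le i (omtV i v y) (v y)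

lemma sum_enorm_fderiv_angOp_sq_le (hv : ContDiff ℝ 2 v) (i : Fin 3) (y τ : E3) :
    ∑ j, ‖fderiv ℝ (angOp i fun y => v y j) y τ‖ₑ ^ 2 ≤
      2 * ∑ j, ‖fderiv ℝ (fun y => omtV i v y j) y τ‖ₑ ^ 2 +
        2 * ∑ j, ‖fderiv ℝ (fun y => v y j) y τ‖ₑ ^ 2 := by
  have differentiable_omtV (j) : DifferentiableAt ℝ (fun y => omtV i v y j) y :=
    (contDiff_pi.1 (contDiff_omtV (n := 1) hv i) j).differentiable one_ne_zero y
  have differentiable_v (k) : DifferentiableAt ℝ (fun y => v y k) y :=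
    (contDiff_pi.1 hv k).differentiable two_ne_zero y
  have commute (j) : fderiv ℝ (angOp i fun y => v y j) y τ =
      fderiv ℝ (fun y => omtV i v y j) y τ -
        ∑ k, Vmat i j k * fderiv ℝ (fun y => v y k) y τ := by
    rw [angOp_apply_eq, fderiv_fun_sub (differentiable_omtV j) (by fun_prop),
      fderiv_fun_sum fun k _ => (differentiable_v k).const_mul _]
    simp [fderiv_const_mul (differentiable_v _)]
  simpa only [commute] using sum_enorm_sub_Vmat_sq_le i _ _

lemma angOp_eq_fderiv (i : Fin 3) (g : E3 → ℝ) (y : E3) :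
    angOp i g y = fderiv ℝ g y (y (i + 1) • EuclideanSpace.single (i + 2) 1 -
      y (i + 2) • EuclideanSpace.single (i + 1) 1) := by
  simp only [angOp, pd, map_sub, map_smul, smul_eq_mul]

lemma sum_radialEnergy_le (hv : ContDiff ℝ 2 v) (y : E3) :
    ∑ j, radialEnergy (fun y => v y j) y ≤
      7 * (∑ j, ‖radV v y j‖ₑ ^ 2 + ∑ i, ∑ j, ‖radV (omtV i v) y j‖ₑ ^ 2) := by
  simp only [radialEnergy, Finset.sum_add_distrib]
  rw [Finset.sum_comm]
  refine add_sum_le_seven_mul fun i => ?_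
  have commute := sum_enorm_fderiv_angOp_sq_le hv i y (‖y‖⁻¹ • y)
  simp only [← radialDeriv_eq_fderiv] at commute
  exact commute

lemma sum_angEnergy_eq {ι : Type*} [Fintype ι] (w : ι → E3 → ℝ) (y : E3) :
    ∑ j, angEnergy (w j) y = ∑ j, ‖w j y‖ₑ ^ 2 + ∑ i, ∑ j, ‖angOp i (w j) y‖ₑ ^ 2 := by
  simp only [angEnergy, Finset.sum_add_distrib]
  rw [Finset.sum_comm]

lemma sum_angEnergy_le (v : VF3) (y : E3) :
    ∑ j, angEnergy (fun y => v y j) y ≤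
      7 * (∑ j, ‖v y j‖ₑ ^ 2 + ∑ i, ∑ j, ‖omtV i v y j‖ₑ ^ 2) := by
  rw [sum_angEnergy_eq]
  exact add_sum_le_seven_mul fun i => sum_enorm_angOp_sq_le v i y

lemma sum_angEnergy_angOp_le (hv : ContDiff ℝ 2 v) (i : Fin 3) (y : E3) :
    ∑ j, angEnergy (angOp i fun y => v y j) y ≤
      2 * ∑ j, angEnergy (fun y => omtV i v y j) y + 2 * ∑ j, angEnergy (fun y => v y j) y := by
  have commute (l) : ∑ j, ‖angOp l (angOp i fun y => v y j) y‖ₑ ^ 2 ≤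
      2 * ∑ j, ‖angOp l (fun y => omtV i v y j) y‖ₑ ^ 2 +
        2 * ∑ j, ‖angOp l (fun y => v y j) y‖ₑ ^ 2 := by
    simp only [angOp_eq_fderiv l]
    exact sum_enorm_fderiv_angOp_sq_le hv i y _
  simp only [sum_angEnergy_eq]
  calc _ ≤ _ := add_le_add (sum_enorm_angOp_sq_le v i y) (Finset.sum_le_sum fun l _ => commute l)
    _ = _ := by
        rw [Finset.sum_add_distrib, ← Finset.mul_sum, ← Finset.mul_sum]
        ring

lemma sum_angEnergyTwo_le (hv : ContDiff ℝ 2 v) (y : E3) :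
    ∑ j, angEnergyTwo (fun y => v y j) y ≤
      98 * (∑ j, ‖v y j‖ₑ ^ 2 + ∑ i, ∑ j, ‖omtV i v y j‖ₑ ^ 2 +
        ∑ i, ∑ l, ∑ j, ‖omtV i (omtV l v) y j‖ₑ ^ 2) := by
  simp only [angEnergyTwo, Finset.sum_add_distrib]
  rw [Finset.sum_comm, Finset.sum_comm (f := fun i l => ∑ j, _)]
  set a := ∑ j, ‖v y j‖ₑ ^ 2
  set b := ∑ i, ∑ j, ‖omtV i v y j‖ₑ ^ 2
  calc _ ≤ 7 * (∑ j, angEnergy (fun y => v y j) y +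
          ∑ i, ∑ j, angEnergy (fun y => omtV i v y j) y) :=
        add_sum_le_seven_mul fun i => sum_angEnergy_angOp_le hv i y
    _ ≤ 7 * (7 * (a + b) + ∑ i, 7 * (∑ j, ‖omtV i v y j‖ₑ ^ 2 +
          ∑ l, ∑ j, ‖omtV l (omtV i v) y j‖ₑ ^ 2)) := by
        gcongr
        · exact sum_angEnergy_le v y
        · exact sum_angEnergy_le _ y
    _ = 49 * a + 98 * b + 49 * ∑ i, ∑ l, ∑ j, ‖omtV l (omtV i v) y j‖ₑ ^ 2 := by
        rw [← Finset.mul_sum, Finset.sum_add_distrib]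
        ring
    _ ≤ _ := by
        rw [mul_add, mul_add]
        gcongr <;> norm_num

lemma l2tail_nonneg (r : ℝ) (v : VF3) : 0 ≤ l2tail r v :=
  Real.rpow_nonneg (integral_nonneg fun _ => Finset.sum_nonneg fun _ _ => sq_nonneg _) _

lemma lintegral_exterior_sum_enorm_sq (r : ℝ) (hv : ∀ j, MemLp (fun y => v y j) 2) :
    ∫⁻ y in exterior r, ∑ j, ‖v y j‖ₑ ^ 2 = ENNReal.ofReal (l2tail r v) ^ 2 := by
  have nonneg (y) : 0 ≤ ∑ j, v y j ^ 2 := Finset.sum_nonneg fun _ _ => sq_nonneg _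
  have integrable : Integrable (fun y => ∑ j, v y j ^ 2) (volume.restrict (exterior r)) :=
    (integrable_finsetSum _ fun j _ => (hv j).integrable_sq).integrableOn
  have sq_l2tail : l2tail r v ^ 2 = ∫ y in exterior r, ∑ j, v y j ^ 2 := by
    rw [l2tail, ← Real.sqrt_eq_rpow, Real.sq_sqrt (integral_nonneg nonneg)]
    rfl
  simp only [sum_enorm_sq_eq_ofReal]
  rw [← ENNReal.ofReal_pow (l2tail_nonneg r v), sq_l2tail,
    ofReal_integral_eq_lintegral_ofReal integrable (.of_forall nonneg)]

lemma memLp_apply (hv : Continuous v) (hc : HasCompactSupport v) (j : Fin 3) :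
    MemLp (fun y => v y j) 2 :=
  ((continuous_pi_iff.1 hv) j).memLp_of_hasCompactSupport (hasCompactSupport_apply hc j)

lemma memLp_radV_apply (hv : ContDiff ℝ 1 v) (hc : HasCompactSupport v) (j : Fin 3) :
    MemLp (fun y => radV v y j) 2 := by
  have hvj : ContDiff ℝ 1 fun y => v y j := contDiff_pi.1 hv j
  have memLp_fderiv : MemLp (fderiv ℝ fun y => v y j) 2 :=
    (hvj.continuous_fderiv one_ne_zero).memLp_of_hasCompactSupport
      ((hasCompactSupport_apply hc j).fderiv ℝ)
  refine memLp_fderiv.mono (measurable_radialDeriv hvj).aestronglyMeasurable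
    (.of_forall fun y => ?_)
  have direction : ‖‖y‖⁻¹ • y‖ ≤ 1 := by
    rw [norm_smul, norm_inv, norm_norm]
    exact inv_mul_le_one
  calc ‖radV v y j‖ = ‖fderiv ℝ (fun y => v y j) y (‖y‖⁻¹ • y)‖ :=
        congrArg _ (radialDeriv_eq_fderiv _ y)
    _ ≤ ‖fderiv ℝ (fun y => v y j) y‖ := ContinuousLinearMap.unit_le_opNorm _ _ direction

end VectorFields

section Norms

variable {u : VF3} {g : E3 → ℝ}

/-- The first factor of the inequality: the exterior `L²` norms of `∂_ρ Ω̃^α u` for `|α| ≤ 1`. -/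
def radialTail (r : ℝ) (u : VF3) : ℝ :=
  l2tail r (radV u) + ∑ i, l2tail r (radV (omtV i u))

/-- The second factor of the inequality: the exterior `L²` norms of `Ω̃^α u` for `|α| ≤ 2`. -/
def angularTail (r : ℝ) (u : VF3) : ℝ :=
  l2tail r u + ∑ i, l2tail r (omtV i u) + ∑ i, ∑ l, l2tail r (omtV i (omtV l u))

lemma radialTail_nonneg (r : ℝ) (u : VF3) : 0 ≤ radialTail r u :=
  add_nonneg (l2tail_nonneg _ _) (Finset.sum_nonneg fun _ _ => l2tail_nonneg _ _)

lemma angularTail_nonneg (r : ℝ) (u : VF3) : 0 ≤ angularTail r u :=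
  add_nonneg (add_nonneg (l2tail_nonneg _ _) (Finset.sum_nonneg fun _ _ => l2tail_nonneg _ _))
    (Finset.sum_nonneg fun _ _ => Finset.sum_nonneg fun _ _ => l2tail_nonneg _ _)

lemma measurable_radialEnergy (hg : ContDiff ℝ 2 g) : Measurable (radialEnergy g) := by
  have measurable_radial := measurable_radialDeriv (hg.of_le one_le_two)
  have measurable_radial_angOp (i) := measurable_radialDeriv (contDiff_angOp (n := 1) hg i)
  unfold radialEnergy
  fun_prop

lemma measurable_angEnergyTwo (hg : ContDiff ℝ 2 g) : Measurable (angEnergyTwo g) := by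
  have measurable_energy := measurable_angEnergy (hg.of_le one_le_two)
  have measurable_energy_angOp (i) := measurable_angEnergy (contDiff_angOp (n := 1) hg i)
  exact measurable_energy.add (Finset.measurable_fun_sum _ fun i _ => measurable_energy_angOp i)

lemma lintegral_exterior_family_le {ι : Type*} [Fintype ι] (r : ℝ) {v : ι → VF3}
    (hv : ∀ i j, MemLp (fun y => v i y j) 2) :
    ∫⁻ y in exterior r, ∑ i, ∑ j, ‖v i y j‖ₑ ^ 2 ≤ ENNReal.ofReal (∑ i, l2tail r (v i)) ^ 2 := by
  have measurable (i) :
      AEMeasurable (fun y => ∑ j, ‖v i y j‖ₑ ^ 2) (volume.restrict (exterior r)) :=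
    Finset.aemeasurable_fun_sum _ fun j _ =>
      (hv i j).restrict _ |>.aestronglyMeasurable.enorm.pow_const 2
  rw [lintegral_finsetSum' _ fun i _ => measurable i,
    ENNReal.ofReal_sum_of_nonneg fun _ _ => l2tail_nonneg _ _]
  simp only [fun i => lintegral_exterior_sum_enorm_sq r (hv i)]
  exact Finset.sum_sq_le_sq_sum_of_nonneg fun _ _ => zero_le

lemma sum_lintegral_radialEnergy_le (hu : ContDiff ℝ 2 u) (hc : HasCompactSupport u) (r : ℝ) :
    ∑ j, ∫⁻ y in exterior r, radialEnergy (fun y => u y j) y ≤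
      7 * ENNReal.ofReal (radialTail r u) ^ 2 := by
  let v (o : Option (Fin 3)) : VF3 := radV (o.elim u (omtV · u))
  have memLp_v : ∀ o j, MemLp (fun y => v o y j) 2
    | none => memLp_radV_apply (hu.of_le one_le_two) hc
    | some i => memLp_radV_apply (contDiff_omtV hu i) (hasCompactSupport_omtV hc i)
  rw [← lintegral_finsetSum _ fun j _ => measurable_radialEnergy (contDiff_pi.1 hu j)]
  calc _ ≤ ∫⁻ y in exterior r, 7 * ∑ o, ∑ j, ‖v o y j‖ₑ ^ 2 :=
        lintegral_mono fun y =>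
          (sum_radialEnergy_le hu y).trans_eq (by rw [Fintype.sum_option]; rfl)
    _ ≤ 7 * ENNReal.ofReal (∑ o, l2tail r (v o)) ^ 2 := by
        rw [lintegral_const_mul' _ _ ENNReal.ofNat_ne_top]
        exact mul_le_mul_right (lintegral_exterior_family_le r memLp_v) 7
    _ = _ := by rw [Fintype.sum_option]; rfl

lemma sum_lintegral_angEnergyTwo_le (hu : ContDiff ℝ 2 u) (hc : HasCompactSupport u) (r : ℝ) :
    ∑ j, ∫⁻ y in exterior r, angEnergyTwo (fun y => u y j) y ≤
      98 * ENNReal.ofReal (angularTail r u) ^ 2 := by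
  let v : (Unit ⊕ Fin 3) ⊕ Fin 3 × Fin 3 → VF3 :=
    Sum.elim (Sum.elim (fun _ => u) (omtV · u)) fun p => omtV p.1 (omtV p.2 u)
  have contDiff_Ω (i) : ContDiff ℝ 1 (omtV i u) := contDiff_omtV hu i
  have support_Ω (i) : HasCompactSupport (omtV i u) := hasCompactSupport_omtV hc i
  have memLp_v : ∀ o j, MemLp (fun y => v o y j) 2
    | .inl (.inl _) => memLp_apply hu.continuous hc
    | .inl (.inr i) => memLp_apply (contDiff_Ω i).continuous (support_Ω i)
    | .inr (i, l) => memLp_apply (contDiff_omtV (n := 0) (contDiff_Ω l) i).continuous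
        (hasCompactSupport_omtV (support_Ω l) i)
  have sum_v {M : Type} [AddCommMonoid M] (F : VF3 → M) :
      ∑ o, F (v o) = F u + ∑ i, F (omtV i u) + ∑ i, ∑ l, F (omtV i (omtV l u)) := by
    simp only [Fintype.sum_sum_type, Fintype.sum_prod_type, Fintype.sum_unique, v, Sum.elim_inl,
      Sum.elim_inr]
  rw [← lintegral_finsetSum _ fun j _ => measurable_angEnergyTwo (contDiff_pi.1 hu j)]
  calc _ ≤ ∫⁻ y in exterior r, 98 * ∑ o, ∑ j, ‖v o y j‖ₑ ^ 2 :=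
        lintegral_mono fun y =>
          (sum_angEnergyTwo_le hu y).trans_eq (congrArg _ (sum_v fun w => ∑ j, ‖w y j‖ₑ ^ 2).symm)
    _ ≤ 98 * ENNReal.ofReal (∑ o, l2tail r (v o)) ^ 2 := by
        rw [lintegral_const_mul' _ _ ENNReal.ofNat_ne_top]
        exact mul_le_mul_right (lintegral_exterior_family_le r memLp_v) 98
    _ = _ := by rw [sum_v, angularTail]

lemma norm_mul_sqrt_pow_four_le (hu : ContDiff ℝ 2 u) (hc : HasCompactSupport u) (x : E3) :
    (‖x‖ * √(∑ j, u x j ^ 2)) ^ 4 ≤ 69 ^ 4 * (radialTail ‖x‖ u * angularTail ‖x‖ u) ^ 2 := by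
  set S := ∑ j, u x j ^ 2 with S_def
  set A := radialTail ‖x‖ u
  set B := angularTail ‖x‖ u
  have A_nonneg : 0 ≤ A := radialTail_nonneg _ _
  have S_nonneg : 0 ≤ S := Finset.sum_nonneg fun _ _ => sq_nonneg _
  have components := sum_sq_le_sum_mul_sum Finset.univ fun j _ =>
    sq_mul_enorm_sq_le (contDiff_pi.1 hu j) (hasCompactSupport_apply hc j) x
  rw [← Finset.mul_sum, ← Finset.mul_sum, sum_enorm_sq_eq_ofReal, ← S_def] at components
  have squared : (ENNReal.ofReal (‖x‖ ^ 2 * S)) ^ 2 ≤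
      ENNReal.ofReal (2 ^ 15 * 7 * 98 * (A * B) ^ 2) :=
    calc _ ≤ 2 ^ 15 * (7 * ENNReal.ofReal A ^ 2) * (98 * ENNReal.ofReal B ^ 2) := by
          rw [ENNReal.ofReal_mul (sq_nonneg _)]
          refine components.trans ?_
          gcongr
          · exact sum_lintegral_radialEnergy_le hu hc ‖x‖
          · exact sum_lintegral_angEnergyTwo_le hu hc ‖x‖
      _ = _ := by
          rw [ENNReal.ofReal_mul (by positivity),
            ENNReal.ofReal_pow (mul_nonneg A_nonneg (angularTail_nonneg _ _)),
            ENNReal.ofReal_mul A_nonneg]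
          norm_num
          ring
  rw [← ENNReal.ofReal_pow (mul_nonneg (sq_nonneg _) S_nonneg),
    ENNReal.ofReal_le_ofReal_iff (by positivity)] at squared
  calc (‖x‖ * √S) ^ 4 = (‖x‖ ^ 2 * √S ^ 2) ^ 2 := by ring
    _ = (‖x‖ ^ 2 * S) ^ 2 := by rw [Real.sq_sqrt S_nonneg]
    _ ≤ 2 ^ 15 * 7 * 98 * (A * B) ^ 2 := squared
    _ ≤ _ := by gcongr; norm_num

end Norms

theorem weighted_sobolev_full_power_general :
    ∃ C > 0, ∀ u : VF3, ContDiff ℝ 2 u → HasCompactSupport u → ∀ x : E3,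
      ‖x‖ * Real.sqrt (∑ j, (u x j) ^ 2) ≤
        C * (l2tail ‖x‖ (radV u) + ∑ i : Fin 3, l2tail ‖x‖ (radV (omtV i u))) ^ ((1 : ℝ) / 2)
          * (l2tail ‖x‖ u + (∑ i : Fin 3, l2tail ‖x‖ (omtV i u))
              + ∑ i : Fin 3, ∑ j : Fin 3, l2tail ‖x‖ (omtV i (omtV j u))) ^ ((1 : ℝ) / 2) := by
  refine ⟨69, by norm_num, fun u hu hc x => ?_⟩
  rw [← Real.sqrt_eq_rpow, ← Real.sqrt_eq_rpow]
  change _ ≤ 69 * √(radialTail ‖x‖ u) * √(angularTail ‖x‖ u)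
  refine (pow_le_pow_iff_left₀ (by positivity) (by positivity) four_ne_zero).1 ?_
  calc _ ≤ 69 ^ 4 * (radialTail ‖x‖ u * angularTail ‖x‖ u) ^ 2 :=
        norm_mul_sqrt_pow_four_le hu hc x
    _ = 69 ^ 4 * (√(radialTail ‖x‖ u) ^ 2 * √(angularTail ‖x‖ u) ^ 2) ^ 2 := by
        rw [Real.sq_sqrt (radialTail_nonneg _ _), Real.sq_sqrt (angularTail_nonneg _ _)]
    _ = _ := by ring

/-- there is a constant `C > 0` such that for every `u ∈ C_c^∞(ℝ³;ℝ³)` and every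
`x ≠ 0`, with `r = |x|`,
`r |u(x)| ≤ C (Σ_{|α|≤1} ‖∂_ρ Ω̃^α u‖_{L²(|y|≥r)})^{1/2} (Σ_{|α|≤2} ‖Ω̃^α u‖_{L²(|y|≥r)})^{1/2}`. -/
theorem weighted_sobolev_full_power :
    ∃ C > 0, ∀ u : VF3, ContDiff ℝ (⊤ : ℕ∞) u → HasCompactSupport u →
      ∀ x : E3, x ≠ 0 →
        ‖x‖ * Real.sqrt (∑ j, (u x j) ^ 2) ≤
          C * (l2tail ‖x‖ (radV u) + ∑ i : Fin 3, l2tail ‖x‖ (radV (omtV i u))) ^ ((1 : ℝ) / 2)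
            * (l2tail ‖x‖ u + (∑ i : Fin 3, l2tail ‖x‖ (omtV i u))
                + ∑ i : Fin 3, ∑ j : Fin 3, l2tail ‖x‖ (omtV i (omtV j u))) ^ ((1 : ℝ) / 2) := by
  obtain ⟨C, C_pos, bound⟩ := weighted_sobolev_full_power_general
  exact ⟨C, C_pos, fun u hu hc x _ => bound u (contDiff_infty.1 hu 2) hc x⟩

end
end

section
/- There exists a constant C > 0 such that: (i) for every u ∈ C_c^∞(ℝ³; ℝ³) with ∇·u = 0 and every x ≠ 0, |x|^{3/2} |ω·u(x)| ≤ C Σ_{|α| ≤ 2} ‖Λ^α u‖_{L²(ℝ³)}; and (ii) for every G ∈ C_c^∞(ℝ³; M₃(ℝ)) with ∂_m G_{mj} = 0 for each j, every x ≠ 0 and every j ∈ {1,2,3}, |x|^{3/2} |ω_i G_{ij}(x)| ≤ C Σ_{|α| ≤ 2} ‖Λ^α G‖_{L²(ℝ³)}; here ω = x/|x| and summation over repeated indices is understood. -/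
open MeasureTheory

noncomputable section

/-- Matrix fields on `ℝ³`. -/
abbrev MF3 : Type := E3 → Fin 3 → Fin 3 → ℝ

/-- The time-independent vector fields `Λ = (∂₁, ∂₂, ∂₃, Ω̃₁, Ω̃₂, Ω̃₃, S₀)` acting on
vector fields, where `Ω̃_i u = Ω_i u + V^i u` and `S₀ = x·∇`. -/
noncomputable def lamV (a : Fin 7) (u : VF3) : VF3 := fun x j =>
  if h : (a : ℕ) < 3 then pd ⟨(a : ℕ), h⟩ (fun y => u y j) x
  else if h2 : (a : ℕ) < 6 then
    angOp ⟨(a : ℕ) - 3, by omega⟩ (fun y => u y j) x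
      + ∑ k, Vmat ⟨(a : ℕ) - 3, by omega⟩ j k * u x k
  else ∑ k, x k * pd k (fun y => u y j) x

/-- The time-independent vector fields `Λ = (∂₁, ∂₂, ∂₃, Ω̃₁, Ω̃₂, Ω̃₃, S₀)` acting on
matrix fields, where `Ω̃_i G = Ω_i G + [V^i, G]` and `S₀ = x·∇`. -/
noncomputable def lamM (a : Fin 7) (G : MF3) : MF3 := fun x j k =>
  if h : (a : ℕ) < 3 then pd ⟨(a : ℕ), h⟩ (fun y => G y j k) x
  else if h2 : (a : ℕ) < 6 then
    angOp ⟨(a : ℕ) - 3, by omega⟩ (fun y => G y j k) x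
      + ∑ l, (Vmat ⟨(a : ℕ) - 3, by omega⟩ j l * G x l k
        - G x j l * Vmat ⟨(a : ℕ) - 3, by omega⟩ l k)
  else ∑ l, x l * pd l (fun y => G y j k) x

/-- The `L²(ℝ³)` norm of a vector field. -/
noncomputable def l2V (u : VF3) : ℝ := (∫ x, ∑ j, (u x j) ^ 2) ^ ((1 : ℝ) / 2)

/-- The `L²(ℝ³)` norm of a matrix field. -/
noncomputable def l2M (G : MF3) : ℝ := (∫ x, ∑ j, ∑ k, (G x j k) ^ 2) ^ ((1 : ℝ) / 2)

/-- `Σ_{|α| ≤ 2} ‖Λ^α u‖_{L²}` for a vector field. -/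
noncomputable def sum2V (u : VF3) : ℝ :=
  l2V u + (∑ a : Fin 7, l2V (lamV a u)) + ∑ a : Fin 7, ∑ b : Fin 7, l2V (lamV a (lamV b u))

/-- `Σ_{|α| ≤ 2} ‖Λ^α G‖_{L²}` for a matrix field. -/
noncomputable def sum2M (G : MF3) : ℝ :=
  l2M G + (∑ a : Fin 7, l2M (lamM a G)) + ∑ a : Fin 7, ∑ b : Fin 7, l2M (lamM a (lamM b G))

/-!
Write `d = 3`. Taylor's formula for `s ↦ (1 - s) ^ 2 • u (x + s • v)`, which vanishes to second
order at `s = 1`, bounds `‖u x‖ ^ 2` by the integral over `s ∈ [0, 1]` of `s ^ 2` times the squared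
jet of `u` along the segment from `x` to `x + v`. Averaging over the directions of `v` turns
`s ^ (d - 1)` into the volume element, which gives the Sobolev inequality `H² ⊂ L^∞` on a ball with
the correct scaling in the radius `R`: `R ^ d * ‖u x‖ ^ 2` is bounded by a multiple of the sum over
`k ≤ 2` of `R ^ (2 * k) * ‖∇ᵏ u‖²_{L²}`.

Take `R = ‖x‖ / 2`. On the ball of radius `R` about `x` one has `R ≤ ‖y‖`, and `‖y‖ * ∇` is a
bounded combination of the rotations and of the scaling field, because
`‖y‖ ^ 2 • v = ⟪y, v⟫ • y + ∑ i, ⟪e_i × y, v⟫ • (e_i × y)`. Hence the right-hand side is controlled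
by the norms of `Λ^α u`, `|α| ≤ 2`, and the zeroth-order parts `V^i` only change the constant.
-/

section OneDimensional

variable {F : Type*} [NormedAddCommGroup F] [NormedSpace ℝ F] [CompleteSpace F]

lemma sq_norm_integral_zero_one_le {f : ℝ → F} (hf : Continuous f) :
    ‖∫ s in (0 : ℝ)..1, f s‖ ^ 2 ≤ ∫ s in (0 : ℝ)..1, ‖f s‖ ^ 2 := by
  have : IsProbabilityMeasure (volume.restrict (Set.Ioc (0 : ℝ) 1)) := ⟨by simp⟩
  have hconvex : ConvexOn ℝ Set.univ fun w : F => ‖w‖ ^ 2 :=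
    convexOn_univ_norm.pow (fun _ _ => norm_nonneg _) 2
  simp only [intervalIntegral.integral_of_le zero_le_one]
  exact hconvex.map_integral_le (by fun_prop) isClosed_univ (by simp)
    hf.integrableOn_Ioc (hf.norm.pow 2).integrableOn_Ioc

/-- The second derivative of `s ↦ (1 - s) ^ 2 • g s`, given the jet `(g, g', g'')` of `g`. -/
def cutoffSecondDeriv (g g' g'' : ℝ → F) (s : ℝ) : F :=
  (1 - s) ^ 2 • g'' s - (4 * (1 - s)) • g' s + (2 : ℝ) • g s

variable {g g' g'' : ℝ → F}

/-- Taylor's formula at `0` for `s ↦ (1 - s) ^ 2 • g s`, expanded at `1`, where it vanishes to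
second order. -/
lemma integral_smul_cutoffSecondDeriv (hg : ∀ s, HasDerivAt g (g' s) s)
    (hg' : ∀ s, HasDerivAt g' (g'' s) s) (hg'' : Continuous g'') :
    ∫ s in (0 : ℝ)..1, s • cutoffSecondDeriv g g' g'' s = g 0 := by
  have cg : Continuous g := continuous_iff_continuousAt.2 fun s => (hg s).continuousAt
  have cg' : Continuous g' := continuous_iff_continuousAt.2 fun s => (hg' s).continuousAt
  have primitive : ∀ s ∈ Set.uIcc (0 : ℝ) 1, HasDerivAt
      (fun s => s • ((1 - s) ^ 2 • g' s - (2 * (1 - s)) • g s) - (1 - s) ^ 2 • g s)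
      (s • cutoffSecondDeriv g g' g'' s) s := by
    intro s _
    have h1 : HasDerivAt (fun s : ℝ => 1 - s) (-1) s := (hasDerivAt_id s).const_sub 1
    refine (((hasDerivAt_id s).smul (((h1.pow 2).smul (hg' s)).sub
      ((h1.const_mul 2).smul (hg s)))).sub ((h1.pow 2).smul (hg s))).congr_deriv ?_
    simp only [cutoffSecondDeriv, Pi.pow_apply, Pi.sub_apply, Pi.smul_apply', id]
    module
  have hcont : Continuous fun s : ℝ => s • cutoffSecondDeriv g g' g'' s := by
    unfold cutoffSecondDeriv
    fun_prop
  rw [intervalIntegral.integral_eq_sub_of_hasDerivAt primitive (hcont.intervalIntegrable _ _)]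
  simp

omit [CompleteSpace F] in
lemma sq_norm_cutoffSecondDeriv_le {s : ℝ} (hs : s ∈ Set.Icc (0 : ℝ) 1) :
    ‖cutoffSecondDeriv g g' g'' s‖ ^ 2 ≤ 48 * (‖g s‖ ^ 2 + ‖g' s‖ ^ 2 + ‖g'' s‖ ^ 2) := by
  have h0 : 0 ≤ 1 - s := sub_nonneg.2 hs.2
  have h1 : 1 - s ≤ 1 := sub_le_self _ hs.1
  have hnorm : ‖cutoffSecondDeriv g g' g'' s‖ ≤ ‖g'' s‖ + 4 * ‖g' s‖ + 2 * ‖g s‖ := by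
    refine (norm_add_le _ _).trans (add_le_add ((norm_sub_le _ _).trans (add_le_add ?_ ?_)) ?_)
    · rw [norm_smul, Real.norm_of_nonneg (by positivity)]
      exact mul_le_of_le_one_left (norm_nonneg _) (pow_le_one₀ h0 h1)
    · rw [norm_smul, Real.norm_of_nonneg (by positivity)]
      gcongr
      linarith
    · simp [norm_smul]
  calc ‖cutoffSecondDeriv g g' g'' s‖ ^ 2
      ≤ (‖g'' s‖ + 4 * ‖g' s‖ + 2 * ‖g s‖) ^ 2 := by gcongr
    _ ≤ 3 * (‖g'' s‖ ^ 2 + (4 * ‖g' s‖) ^ 2 + (2 * ‖g s‖) ^ 2) := by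
      linarith [sq_nonneg (‖g'' s‖ - 4 * ‖g' s‖), sq_nonneg (‖g'' s‖ - 2 * ‖g s‖),
        sq_nonneg (4 * ‖g' s‖ - 2 * ‖g s‖)]
    _ ≤ 48 * (‖g s‖ ^ 2 + ‖g' s‖ ^ 2 + ‖g'' s‖ ^ 2) := by
      linarith [sq_nonneg ‖g s‖, sq_nonneg ‖g'' s‖]

lemma sq_norm_zero_le_integral_sq (hg : ∀ s, HasDerivAt g (g' s) s)
    (hg' : ∀ s, HasDerivAt g' (g'' s) s) (hg'' : Continuous g'') :
    ‖g 0‖ ^ 2 ≤ 48 * ∫ s in (0 : ℝ)..1, s ^ 2 * (‖g s‖ ^ 2 + ‖g' s‖ ^ 2 + ‖g'' s‖ ^ 2) := by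
  have cg : Continuous g := continuous_iff_continuousAt.2 fun s => (hg s).continuousAt
  have cg' : Continuous g' := continuous_iff_continuousAt.2 fun s => (hg' s).continuousAt
  have hcont : Continuous fun s : ℝ => s • cutoffSecondDeriv g g' g'' s := by
    unfold cutoffSecondDeriv
    fun_prop
  calc ‖g 0‖ ^ 2 = ‖∫ s in (0 : ℝ)..1, s • cutoffSecondDeriv g g' g'' s‖ ^ 2 := by
        rw [integral_smul_cutoffSecondDeriv hg hg' hg'']
    _ ≤ ∫ s in (0 : ℝ)..1, ‖s • cutoffSecondDeriv g g' g'' s‖ ^ 2 :=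
        sq_norm_integral_zero_one_le hcont
    _ ≤ ∫ s in (0 : ℝ)..1, 48 * (s ^ 2 * (‖g s‖ ^ 2 + ‖g' s‖ ^ 2 + ‖g'' s‖ ^ 2)) := by
        refine intervalIntegral.integral_mono_on zero_le_one
          (Continuous.intervalIntegrable (by fun_prop) _ _)
          (Continuous.intervalIntegrable (by fun_prop) _ _) fun s hs => ?_
        rw [norm_smul, mul_pow, Real.norm_eq_abs, sq_abs, mul_left_comm]
        exact mul_le_mul_of_nonneg_left (sq_norm_cutoffSecondDeriv_le hs) (sq_nonneg s)
    _ = _ := intervalIntegral.integral_const_mul _ _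

end OneDimensional

section Polar

lemma integral_volumeIoiPow {F : Type*} [NormedAddCommGroup F] [NormedSpace ℝ F] (n : ℕ)
    (f : ℝ → F) :
    ∫ s, f s ∂Measure.volumeIoiPow n = ∫ s in Set.Ioi (0 : ℝ), s ^ n • f s := by
  rw [Measure.volumeIoiPow, integral_withDensity_eq_integral_toReal_smul (by fun_prop) (by simp),
    integral_subtype_comap measurableSet_Ioi fun s : ℝ => (ENNReal.ofReal (s ^ n)).toReal • f s]
  refine setIntegral_congr_fun measurableSet_Ioi fun s hs => ?_
  simp only [ENNReal.toReal_ofReal (pow_nonneg (le_of_lt hs) n)]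

variable {E : Type*} [NormedAddCommGroup E] [NormedSpace ℝ E]

lemma homeomorphUnitSphereProd_snd_smul_fst (x : ({0}ᶜ : Set E)) :
    (homeomorphUnitSphereProd E x).2.1 • (homeomorphUnitSphereProd E x).1.1 = x :=
  congrArg Subtype.val ((homeomorphUnitSphereProd E).symm_apply_apply x)

variable [MeasurableSpace E] [BorelSpace E] [FiniteDimensional ℝ E] (μ : Measure E)
  [μ.IsAddHaarMeasure]

lemma integrable_toSphere_prod {F : Type*} [NormedAddCommGroup F] {f : E → F}
    (hf : Integrable f μ) :
    Integrable (fun p : Metric.sphere (0 : E) 1 × Set.Ioi (0 : ℝ) => f (p.2.1 • p.1.1))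
      (μ.toSphere.prod (.volumeIoiPow (Module.finrank ℝ E - 1))) := by
  rw [← μ.measurePreserving_homeomorphUnitSphereProd.integrable_comp_emb
    (Homeomorph.measurableEmbedding _)]
  simp only [Function.comp_def, homeomorphUnitSphereProd_snd_smul_fst]
  exact (integrableOn_iff_comap_subtypeVal (measurableSet_singleton _).compl).1 hf.integrableOn

variable [Nontrivial E]

lemma integral_eq_integral_toSphere_prod {F : Type*} [NormedAddCommGroup F] [NormedSpace ℝ F]
    (f : E → F) :
    ∫ z, f z ∂μ = ∫ p, f (p.2.1 • p.1.1)
      ∂μ.toSphere.prod (.volumeIoiPow (Module.finrank ℝ E - 1)) := by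
  rw [← μ.measurePreserving_homeomorphUnitSphereProd.integral_comp
    (Homeomorph.measurableEmbedding _)]
  simp only [homeomorphUnitSphereProd_snd_smul_fst]
  rw [integral_subtype_comap (measurableSet_singleton _).compl f, restrict_compl_singleton]

lemma toSphere_real_mul_le_integral {f : E → ℝ} (hf : Integrable f μ) {c : ℝ}
    (hc : ∀ w : E, ‖w‖ = 1 →
      c ≤ ∫ s in Set.Ioi (0 : ℝ), s ^ (Module.finrank ℝ E - 1) * f (s • w)) :
    μ.toSphere.real Set.univ * c ≤ ∫ z, f z ∂μ := by
  have hint := integrable_toSphere_prod μ hf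
  calc μ.toSphere.real Set.univ * c = ∫ _, c ∂μ.toSphere := by simp
    _ ≤ ∫ w, ∫ s, f (s.1 • w.1) ∂Measure.volumeIoiPow (Module.finrank ℝ E - 1) ∂μ.toSphere := by
      refine integral_mono (integrable_const _) hint.integral_prod_left fun w => ?_
      simpa only [integral_volumeIoiPow _ fun s => f (s • w.1), smul_eq_mul]
        using hc w.1 (by simp)
    _ = ∫ z, f z ∂μ := by rw [integral_eq_integral_toSphere_prod μ f, integral_prod _ hint]

lemma toSphere_real_mul_le_setIntegral_ball {f : E → ℝ} {x : E} {R : ℝ} (hR : 0 < R)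
    (hf : IntegrableOn f (Metric.ball x R) μ) {c : ℝ}
    (hc : ∀ w : E, ‖w‖ = 1 →
      c ≤ ∫ s in Set.Ioo (0 : ℝ) 1, s ^ (Module.finrank ℝ E - 1) * f (x + s • R • w)) :
    μ.toSphere.real Set.univ * (R ^ Module.finrank ℝ E * c) ≤ ∫ z in Metric.ball x R, f z ∂μ := by
  set f₁ := (Metric.ball x R).indicator f
  have hf₁_int : Integrable f₁ μ := hf.integrable_indicator Metric.isOpen_ball.measurableSet
  have hradial : ∀ w : E, ‖w‖ = 1 →
      c ≤ ∫ s in Set.Ioi (0 : ℝ), s ^ (Module.finrank ℝ E - 1) * f₁ (x + R • s • w) := by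
    intro w hw
    refine (hc w hw).trans_eq ?_
    rw [← integral_indicator measurableSet_Ioo, ← integral_indicator measurableSet_Ioi]
    congr 1 with s
    by_cases hs : 0 < s
    · have hmem : x + R • s • w ∈ Metric.ball x R ↔ s < 1 := by
        simp [norm_smul, hw, abs_of_pos hR, abs_of_pos hs, mul_lt_iff_lt_one_right hR]
      by_cases hs1 : s < 1
      · simp [f₁, hs, hs1, hmem, smul_comm s R w]
      · simp [f₁, hs, hs1, hmem]
    · simp [hs]
  have hunit := toSphere_real_mul_le_integral μ
    ((hf₁_int.comp_add_left x).comp_smul hR.ne') hradial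
  rw [Measure.integral_comp_smul μ (fun z => f₁ (x + z)), integral_add_left_eq_self f₁ x,
    abs_of_pos (by positivity), smul_eq_mul, le_inv_mul_iff₀ (by positivity),
    integral_indicator Metric.isOpen_ball.measurableSet] at hunit
  linarith

end Polar

section Sobolev

variable {E F : Type*} [NormedAddCommGroup E] [NormedSpace ℝ E] [NormedAddCommGroup F]
  [NormedSpace ℝ F]

/-- The density of the `H²` energy of `u` at length scale `R`. -/
def sobolevDensity (R : ℝ) (u : E → F) (y : E) : ℝ :=
  ‖u y‖ ^ 2 + (R * ‖fderiv ℝ u y‖) ^ 2 + (R ^ 2 * ‖fderiv ℝ (fderiv ℝ u) y‖) ^ 2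

lemma sobolevDensity_nonneg (R : ℝ) (u : E → F) (y : E) : 0 ≤ sobolevDensity R u y := by
  unfold sobolevDensity
  positivity

variable {u : E → F}

lemma continuous_sobolevDensity (hu : ContDiff ℝ 2 u) (R : ℝ) :
    Continuous (sobolevDensity R u) := by
  have h1 : ContDiff ℝ 1 (fderiv ℝ u) := hu.fderiv_right (by norm_num)
  have c0 := hu.continuous
  have c1 := h1.continuous
  have c2 := h1.continuous_fderiv (by norm_num)
  exact ((c0.norm.pow 2).add ((continuous_const.mul c1.norm).pow 2)).add
    ((continuous_const.mul c2.norm).pow 2)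

lemma hasDerivAt_comp_ray (hu : Differentiable ℝ u) (x v : E) (s : ℝ) :
    HasDerivAt (fun s : ℝ => u (x + s • v)) (fderiv ℝ u (x + s • v) v) s := by
  have hray : HasDerivAt (fun s : ℝ => x + s • v) v s := by
    simpa using ((hasDerivAt_id s).smul_const v).const_add x
  exact (hu _).hasFDerivAt.comp_hasDerivAt s hray

lemma sq_norm_le_integral_sobolevDensity_ray [CompleteSpace F] (hu : ContDiff ℝ 2 u) (x : E)
    {v : E} {R : ℝ} (hv : ‖v‖ ≤ R) :
    ‖u x‖ ^ 2 ≤ 48 * ∫ s in (0 : ℝ)..1, s ^ 2 * sobolevDensity R u (x + s • v) := by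
  have h1 : ContDiff ℝ 1 (fderiv ℝ u) := hu.fderiv_right (by norm_num)
  have hR : 0 ≤ R := (norm_nonneg v).trans hv
  have hderiv := hasDerivAt_comp_ray (hu.differentiable (by norm_num)) x v
  have hderiv' (s : ℝ) : HasDerivAt (fun s : ℝ => fderiv ℝ u (x + s • v) v)
      (fderiv ℝ (fderiv ℝ u) (x + s • v) v v) s := by
    simpa using (hasDerivAt_comp_ray (h1.differentiable (by norm_num)) x v s).clm_apply
      (hasDerivAt_const s v)
  have hdensity (y : E) : ‖u y‖ ^ 2 + ‖fderiv ℝ u y v‖ ^ 2 + ‖fderiv ℝ (fderiv ℝ u) y v v‖ ^ 2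
      ≤ sobolevDensity R u y := by
    have hfirst : ‖fderiv ℝ u y v‖ ≤ R * ‖fderiv ℝ u y‖ := by
      rw [mul_comm]
      exact (fderiv ℝ u y).le_opNorm_of_le hv
    have hsecond : ‖fderiv ℝ (fderiv ℝ u) y v v‖ ≤ R ^ 2 * ‖fderiv ℝ (fderiv ℝ u) y‖ := by
      calc _ ≤ ‖fderiv ℝ (fderiv ℝ u) y‖ * ‖v‖ * ‖v‖ := (fderiv ℝ (fderiv ℝ u) y).le_opNorm₂ v v
        _ ≤ ‖fderiv ℝ (fderiv ℝ u) y‖ * R * R := by gcongr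
        _ = _ := by ring
    unfold sobolevDensity
    gcongr
  have hline := sq_norm_zero_le_integral_sq hderiv hderiv' (by fun_prop)
  rw [zero_smul, add_zero] at hline
  refine hline.trans ?_
  gcongr
  have cdens := continuous_sobolevDensity hu R
  refine intervalIntegral.integral_mono_on zero_le_one
    (Continuous.intervalIntegrable (by fun_prop) _ _)
    (Continuous.intervalIntegrable (by fun_prop) _ _) fun s _ => ?_
  gcongr
  exact hdensity _

variable [CompleteSpace F] [FiniteDimensional ℝ E] [Nontrivial E] [MeasurableSpace E] [BorelSpace E]

/-- In polar coordinates centred at `x` the volume element is `s ^ (dim E - 1)`, which dominates the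
weight `s ^ 2` of the one-dimensional estimate exactly when `dim E ≤ 3`. -/
theorem toSphere_real_mul_sq_norm_le_setIntegral_ball (μ : Measure E) [μ.IsAddHaarMeasure]
    (hE : Module.finrank ℝ E ≤ 3) (hu : ContDiff ℝ 2 u) (x : E) {R : ℝ} (hR : 0 < R) :
    μ.toSphere.real Set.univ * (R ^ Module.finrank ℝ E * ‖u x‖ ^ 2)
      ≤ 48 * ∫ y in Metric.ball x R, sobolevDensity R u y ∂μ := by
  have cdens := continuous_sobolevDensity hu R
  have hradial : ∀ w : E, ‖w‖ = 1 → ‖u x‖ ^ 2 / 48 ≤ ∫ s in Set.Ioo (0 : ℝ) 1,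
      s ^ (Module.finrank ℝ E - 1) * sobolevDensity R u (x + s • R • w) := by
    intro w hw
    have hRw : ‖R • w‖ ≤ R := by rw [norm_smul, hw, mul_one, Real.norm_of_nonneg hR.le]
    rw [div_le_iff₀' (by norm_num), ← integral_Ioc_eq_integral_Ioo,
      ← intervalIntegral.integral_of_le zero_le_one]
    refine (sq_norm_le_integral_sobolevDensity_ray hu x hRw).trans ?_
    gcongr
    refine intervalIntegral.integral_mono_on zero_le_one
      (Continuous.intervalIntegrable (by fun_prop) _ _)
      (Continuous.intervalIntegrable (by fun_prop) _ _) fun s hs => ?_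
    exact mul_le_mul_of_nonneg_right (pow_le_pow_of_le_one hs.1 hs.2 (by omega))
      (sobolevDensity_nonneg _ _ _)
  have hball := toSphere_real_mul_le_setIntegral_ball μ hR
    ((cdens.locallyIntegrable.integrableOn_isCompact (isCompact_closedBall x R)).mono_set
      Metric.ball_subset_closedBall) hradial
  linarith

end Sobolev

section FirstOrderOperators

variable {E F ι : Type*} [NormedAddCommGroup E] [NormedSpace ℝ E] [NormedAddCommGroup F]
  [NormedSpace ℝ F]

/-- The first-order operator `u ↦ X·∇u + V u` of a linear vector field `X` and a constant
zeroth-order coefficient `V`. -/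
def firstOrderOp (X : E →L[ℝ] E) (V : F →L[ℝ] F) (u : E → F) (y : E) : F :=
  fderiv ℝ u y (X y) + V (u y)

lemma contDiff_firstOrderOp {n m : WithTop ℕ∞} {u : E → F} (X : E →L[ℝ] E) (V : F →L[ℝ] F)
    (hu : ContDiff ℝ n u) (hmn : m + 1 ≤ n) : ContDiff ℝ m (firstOrderOp X V u) :=
  ((hu.fderiv_right hmn).clm_apply X.contDiff).add
    (V.contDiff.comp (hu.of_le (le_self_add.trans hmn)))

lemma hasCompactSupport_firstOrderOp {u : E → F} (X : E →L[ℝ] E) (V : F →L[ℝ] F)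
    (hu : HasCompactSupport u) : HasCompactSupport (firstOrderOp X V u) := by
  refine HasCompactSupport.add ((hu.fderiv ℝ).mono fun y hy => ?_) (hu.comp_left (map_zero V))
  contrapose! hy
  simp [Function.notMem_support.1 hy]

lemma fderiv_firstOrderOp_apply {u : E → F} (X : E →L[ℝ] E) (V : F →L[ℝ] F)
    (hu : ContDiff ℝ 2 u) (y v : E) :
    fderiv ℝ (firstOrderOp X V u) y v =
      fderiv ℝ (fderiv ℝ u) y v (X y) + fderiv ℝ u y (X v) + V (fderiv ℝ u y v) := by
  have h0 : HasFDerivAt u (fderiv ℝ u y) y := (hu.differentiable (by norm_num) y).hasFDerivAt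
  have h1 : HasFDerivAt (fderiv ℝ u) (fderiv ℝ (fderiv ℝ u) y) y :=
    ((hu.fderiv_right (m := 1) (by norm_num)).differentiable (by norm_num) y).hasFDerivAt
  have := (h1.clm_apply X.hasFDerivAt).add (V.hasFDerivAt.comp y h0)
  rw [show fderiv ℝ (firstOrderOp X V u) y = _ from this.fderiv]
  simp only [add_apply, ContinuousLinearMap.comp_apply,
    ContinuousLinearMap.flip_apply]
  abel

/-- Linear vector fields `X a` that span every tangent space away from the origin, uniformly with
respect to dilations: `v` is a combination of the `X a y` with coefficients of size
`‖v‖ / ‖y‖`. The identity is multiplied through by `‖y‖ ^ 2` to include `y = 0`. -/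
def IsConicalFrame [Fintype ι] (X : ι → E →L[ℝ] E) : Prop :=
  ∀ y v : E, ∃ c : ι → ℝ, (∀ a, |c a| ≤ ‖y‖ * ‖v‖) ∧ ‖y‖ ^ 2 • v = ∑ a, c a • X a y

variable [Fintype ι] {X : ι → E →L[ℝ] E}

lemma IsConicalFrame.norm_mul_norm_le (hX : IsConicalFrame X) (D : E →L[ℝ] F) (y : E) :
    ‖y‖ * ‖D‖ ≤ ∑ a, ‖D (X a y)‖ := by
  rcases eq_or_ne y 0 with rfl | hy
  · simp
  have hy' : 0 < ‖y‖ := norm_pos_iff.2 hy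
  rw [mul_comm, ← le_div_iff₀ hy']
  refine D.opNorm_le_bound (by positivity) fun v => ?_
  obtain ⟨c, hc, hcv⟩ := hX y v
  have hexpand : ‖y‖ ^ 2 * ‖D v‖ ≤ ‖y‖ * ‖v‖ * ∑ a, ‖D (X a y)‖ := by
    calc ‖y‖ ^ 2 * ‖D v‖ = ‖D (‖y‖ ^ 2 • v)‖ := by simp [norm_smul]
      _ = ‖∑ a, c a • D (X a y)‖ := by simp only [hcv, map_sum, map_smul]
      _ ≤ ∑ a, ‖y‖ * ‖v‖ * ‖D (X a y)‖ := norm_sum_le_of_le _ fun a _ => by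
        rw [norm_smul, Real.norm_eq_abs]
        exact mul_le_mul_of_nonneg_right (hc a) (norm_nonneg _)
      _ = _ := (Finset.mul_sum _ _ _).symm
  rw [div_mul_eq_mul_div, le_div_iff₀ hy']
  refine le_of_mul_le_mul_left ?_ hy'
  linarith

lemma IsConicalFrame.sq_norm_mul_norm_le (hX : IsConicalFrame X) (B : E →L[ℝ] E →L[ℝ] F)
    (y : E) : ‖y‖ ^ 2 * ‖B‖ ≤ ∑ a, ∑ b, ‖B (X a y) (X b y)‖ := by
  calc ‖y‖ ^ 2 * ‖B‖ = ‖y‖ * (‖y‖ * ‖B‖) := by ring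
    _ ≤ ‖y‖ * ∑ a, ‖B (X a y)‖ := by gcongr; exact hX.norm_mul_norm_le B y
    _ = ∑ a, ‖y‖ * ‖B (X a y)‖ := Finset.mul_sum _ _ _
    _ ≤ _ := Finset.sum_le_sum fun a _ => hX.norm_mul_norm_le (B (X a y)) y

/-- The pointwise size `Σ_{|α| ≤ 2} |Γ^α u|` of the iterated operators `Γ_a = X_a·∇ + V_a`. -/
def jetSize (X : ι → E →L[ℝ] E) (V : ι → F →L[ℝ] F) (u : E → F) (y : E) : ℝ :=
  ‖u y‖ + ∑ a, ‖firstOrderOp (X a) (V a) u y‖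
    + ∑ a, ∑ b, ‖firstOrderOp (X a) (V a) (firstOrderOp (X b) (V b) u) y‖

lemma norm_le_jetSize (V : ι → F →L[ℝ] F) (u : E → F) (y : E) : ‖u y‖ ≤ jetSize X V u y := by
  rw [jetSize, add_assoc]
  exact le_add_of_nonneg_right (by positivity)

lemma sum_norm_firstOrderOp_le_jetSize (V : ι → F →L[ℝ] F) (u : E → F) (y : E) :
    ∑ a, ‖firstOrderOp (X a) (V a) u y‖ ≤ jetSize X V u y := by
  rw [jetSize, add_right_comm]
  exact le_add_of_nonneg_left (by positivity)

lemma sum_norm_firstOrderOp_firstOrderOp_le_jetSize (V : ι → F →L[ℝ] F) (u : E → F) (y : E) :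
    ∑ a, ∑ b, ‖firstOrderOp (X a) (V a) (firstOrderOp (X b) (V b) u) y‖ ≤ jetSize X V u y := by
  rw [jetSize]
  exact le_add_of_nonneg_left (by positivity)

lemma sum_norm_fderiv_apply_le (V : ι → F →L[ℝ] F) (u : E → F) (y : E) :
    ∑ a, ‖fderiv ℝ u y (X a y)‖ ≤ (1 + ∑ a, ‖V a‖) * jetSize X V u y := by
  calc ∑ a, ‖fderiv ℝ u y (X a y)‖
      ≤ ∑ a, (‖firstOrderOp (X a) (V a) u y‖ + ‖V a‖ * ‖u y‖) := by
        refine Finset.sum_le_sum fun a _ => ?_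
        calc ‖fderiv ℝ u y (X a y)‖ = ‖firstOrderOp (X a) (V a) u y - V a (u y)‖ := by
              simp [firstOrderOp]
          _ ≤ ‖firstOrderOp (X a) (V a) u y‖ + ‖V a‖ * ‖u y‖ :=
              (norm_sub_le _ _).trans (by gcongr; exact (V a).le_opNorm _)
    _ = ∑ a, ‖firstOrderOp (X a) (V a) u y‖ + (∑ a, ‖V a‖) * ‖u y‖ := by
        rw [Finset.sum_add_distrib, Finset.sum_mul]
    _ ≤ jetSize X V u y + (∑ a, ‖V a‖) * jetSize X V u y := by
        gcongr
        · exact sum_norm_firstOrderOp_le_jetSize V u y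
        · exact norm_le_jetSize V u y
    _ = _ := by ring

lemma IsConicalFrame.norm_mul_norm_fderiv_le (hX : IsConicalFrame X) (V : ι → F →L[ℝ] F)
    (u : E → F) (y : E) :
    ‖y‖ * ‖fderiv ℝ u y‖ ≤ (1 + ∑ a, ‖V a‖) * jetSize X V u y :=
  (hX.norm_mul_norm_le _ y).trans (sum_norm_fderiv_apply_le V u y)

lemma fderiv_fderiv_apply_apply {u : E → F} (hu : ContDiff ℝ 2 u) (X Y : E →L[ℝ] E)
    (V W : F →L[ℝ] F) (y : E) :
    fderiv ℝ (fderiv ℝ u) y (X y) (Y y) =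
      firstOrderOp X V (firstOrderOp Y W u) y - fderiv ℝ u y (Y (X y))
        - W (fderiv ℝ u y (X y)) - V (firstOrderOp Y W u y) := by
  rw [firstOrderOp, fderiv_firstOrderOp_apply Y W hu]
  abel

lemma sum_norm_apply_apply_le (D : E →L[ℝ] F) (X : ι → E →L[ℝ] E) (y : E) :
    ∑ a, ∑ b, ‖D (X b (X a y))‖ ≤ (∑ a, ‖X a‖) ^ 2 * (‖y‖ * ‖D‖) := by
  calc ∑ a, ∑ b, ‖D (X b (X a y))‖ ≤ ∑ a, ∑ b, ‖D‖ * (‖X b‖ * (‖X a‖ * ‖y‖)) := by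
        gcongr with a _ b _
        exact D.le_opNorm_of_le ((X b).le_opNorm_of_le ((X a).le_opNorm y))
    _ = ∑ a, ∑ b, ‖X a‖ * ‖X b‖ * (‖y‖ * ‖D‖) := by
        congr! 2
        ring
    _ = _ := by simp only [← Finset.sum_mul, ← Finset.sum_mul_sum, sq]

lemma sum_norm_map_le {κ : Type*} [Fintype κ] (V : ι → F →L[ℝ] F) (f : κ → F) :
    ∑ a, ∑ b, ‖V a (f b)‖ ≤ (∑ a, ‖V a‖) * ∑ b, ‖f b‖ := by
  rw [Finset.sum_mul_sum]
  gcongr with a _ b _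
  exact (V a).le_opNorm _

lemma IsConicalFrame.sq_norm_mul_norm_fderiv_fderiv_le (hX : IsConicalFrame X)
    (V : ι → F →L[ℝ] F) {u : E → F} (hu : ContDiff ℝ 2 u) (y : E) :
    ‖y‖ ^ 2 * ‖fderiv ℝ (fderiv ℝ u) y‖
      ≤ (1 + ∑ a, ‖V a‖) * (1 + ∑ a, ‖V a‖ + (∑ a, ‖X a‖) ^ 2) * jetSize X V u y := by
  set K := ∑ a, ‖V a‖
  set M := ∑ a, ‖X a‖
  set J := jetSize X V u y
  have htransport : ∑ a, ∑ b, ‖fderiv ℝ u y (X b (X a y))‖ ≤ M ^ 2 * ((1 + K) * J) :=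
    (sum_norm_apply_apply_le _ X y).trans
      (mul_le_mul_of_nonneg_left (hX.norm_mul_norm_fderiv_le V u y) (sq_nonneg M))
  have hfirst : ∑ a, ∑ b, ‖V b (fderiv ℝ u y (X a y))‖ ≤ K * ((1 + K) * J) := by
    rw [Finset.sum_comm]
    exact (sum_norm_map_le V _).trans (by gcongr; exact sum_norm_fderiv_apply_le V u y)
  have hzeroth : ∑ a, ∑ b, ‖V a (firstOrderOp (X b) (V b) u y)‖ ≤ K * J :=
    (sum_norm_map_le V _).trans (by gcongr; exact sum_norm_firstOrderOp_le_jetSize V u y)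
  calc ‖y‖ ^ 2 * ‖fderiv ℝ (fderiv ℝ u) y‖
      ≤ ∑ a, ∑ b, ‖fderiv ℝ (fderiv ℝ u) y (X a y) (X b y)‖ := hX.sq_norm_mul_norm_le _ y
    _ ≤ ∑ a, ∑ b, (‖firstOrderOp (X a) (V a) (firstOrderOp (X b) (V b) u) y‖
          + ‖fderiv ℝ u y (X b (X a y))‖ + ‖V b (fderiv ℝ u y (X a y))‖
          + ‖V a (firstOrderOp (X b) (V b) u y)‖) := by
        gcongr with a _ b _
        rw [fderiv_fderiv_apply_apply hu (X a) (X b) (V a) (V b)]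
        exact (norm_sub_le _ _).trans (by gcongr; exact norm_sub_le_of_le (norm_sub_le _ _) le_rfl)
    _ ≤ J + M ^ 2 * ((1 + K) * J) + K * ((1 + K) * J) + K * J := by
        simp only [Finset.sum_add_distrib]
        gcongr
        exact sum_norm_firstOrderOp_firstOrderOp_le_jetSize V u y
    _ = _ := by ring

lemma IsConicalFrame.exists_sobolevDensity_le (hX : IsConicalFrame X) (V : ι → F →L[ℝ] F) :
    ∃ C > 0, ∀ u : E → F, ContDiff ℝ 2 u → ∀ R y, 0 ≤ R → R ≤ ‖y‖ →
      sobolevDensity R u y ≤ C * jetSize X V u y ^ 2 := by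
  set A := 1 + ∑ a, ‖V a‖
  set B := A * (A + (∑ a, ‖X a‖) ^ 2)
  refine ⟨1 + A ^ 2 + B ^ 2, by positivity, fun u hu R y hR hRy => ?_⟩
  have hvalue : ‖u y‖ ≤ jetSize X V u y := norm_le_jetSize V u y
  have hfirst : R * ‖fderiv ℝ u y‖ ≤ A * jetSize X V u y :=
    le_trans (by gcongr) (hX.norm_mul_norm_fderiv_le V u y)
  have hsecond : R ^ 2 * ‖fderiv ℝ (fderiv ℝ u) y‖ ≤ B * jetSize X V u y :=
    le_trans (by gcongr) (hX.sq_norm_mul_norm_fderiv_fderiv_le V hu y)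
  calc sobolevDensity R u y
      ≤ jetSize X V u y ^ 2 + (A * jetSize X V u y) ^ 2 + (B * jetSize X V u y) ^ 2 := by
        unfold sobolevDensity
        gcongr
    _ = _ := by ring

end FirstOrderOperators

section LTwo

variable {α F : Type*} [MeasurableSpace α] {μ : Measure α} [NormedAddCommGroup F]

lemma lpNorm_sum_norm_le {κ : Type*} [Fintype κ] {p : ENNReal} (hp : 1 ≤ p) {f : κ → α → F}
    (hf : ∀ a, MemLp (f a) p μ) :
    lpNorm (fun y => ∑ a, ‖f a y‖) p μ ≤ ∑ a, lpNorm (f a) p μ := by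
  calc lpNorm (fun y => ∑ a, ‖f a y‖) p μ = lpNorm (∑ a, fun y => ‖f a y‖) p μ := by
        congr 1 with y
        simp
    _ ≤ ∑ a, lpNorm (fun y => ‖f a y‖) p μ := lpNorm_sum_le (fun a _ => (hf a).norm) hp
    _ = ∑ a, lpNorm (f a) p μ := by simp only [lpNorm_norm (hf _).aestronglyMeasurable]

lemma lpNorm_two_eq {f : α → F} (hf : AEStronglyMeasurable f μ) :
    lpNorm f 2 μ = (∫ y, ‖f y‖ ^ 2 ∂μ) ^ (1 / 2 : ℝ) := by
  simp [lpNorm_eq_integral_norm_rpow_toReal two_ne_zero ENNReal.ofNat_ne_top hf]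

lemma sq_lpNorm_two_eq {f : α → F} (hf : AEStronglyMeasurable f μ) :
    lpNorm f 2 μ ^ 2 = ∫ y, ‖f y‖ ^ 2 ∂μ := by
  rw [lpNorm_two_eq hf, ← Real.sqrt_eq_rpow, Real.sq_sqrt (by positivity)]

end LTwo

section WeightedSobolev

variable {E F ι : Type*} [NormedAddCommGroup E] [NormedSpace ℝ E] [NormedAddCommGroup F]
  [NormedSpace ℝ F] [Fintype ι] {X : ι → E →L[ℝ] E}

variable [MeasurableSpace E]

/-- The norm `Σ_{|α| ≤ 2} ‖Γ^α u‖_{L²(μ)}` for the operators `Γ_a = X_a·∇ + V_a`. -/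
def jetNorm (X : ι → E →L[ℝ] E) (V : ι → F →L[ℝ] F) (u : E → F) (μ : Measure E) : ℝ :=
  lpNorm u 2 μ + ∑ a, lpNorm (firstOrderOp (X a) (V a) u) 2 μ
    + ∑ a, ∑ b, lpNorm (firstOrderOp (X a) (V a) (firstOrderOp (X b) (V b) u)) 2 μ

/-- Square integrability of `Γ^α u` for all `|α| ≤ 2`, where `Γ_a = X_a·∇ + V_a`. It makes
`jetNorm` meaningful, since `lpNorm` is `0` outside `L²`. -/
structure MemJetLTwo (X : ι → E →L[ℝ] E) (V : ι → F →L[ℝ] F) (u : E → F) (μ : Measure E) :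
    Prop where
  memLp : MemLp u 2 μ
  memLp_firstOrderOp : ∀ a, MemLp (firstOrderOp (X a) (V a) u) 2 μ
  memLp_firstOrderOp_firstOrderOp : ∀ a b,
    MemLp (firstOrderOp (X a) (V a) (firstOrderOp (X b) (V b) u)) 2 μ

variable {μ : Measure E} {V : ι → F →L[ℝ] F} {u : E → F}

lemma jetNorm_nonneg : 0 ≤ jetNorm X V u μ :=
  add_nonneg (add_nonneg lpNorm_nonneg (Finset.sum_nonneg fun _ _ => lpNorm_nonneg))
    (Finset.sum_nonneg fun _ _ => Finset.sum_nonneg fun _ _ => lpNorm_nonneg)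

lemma MemJetLTwo.memLp_jetSize (hu : MemJetLTwo X V u μ) : MemLp (jetSize X V u) 2 μ :=
  (hu.memLp.norm.add (memLp_finsetSum _ fun a _ => (hu.memLp_firstOrderOp a).norm)).add
    (memLp_finsetSum _ fun a _ => memLp_finsetSum _ fun b _ =>
      (hu.memLp_firstOrderOp_firstOrderOp a b).norm)

lemma MemJetLTwo.lpNorm_jetSize_le (hu : MemJetLTwo X V u μ) :
    lpNorm (jetSize X V u) 2 μ ≤ jetNorm X V u μ := by
  have hfirst : MemLp (fun y => ∑ a, ‖firstOrderOp (X a) (V a) u y‖) 2 μ :=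
    memLp_finsetSum _ fun a _ => (hu.memLp_firstOrderOp a).norm
  have hsecond : lpNorm (fun y => ∑ a, ∑ b,
      ‖firstOrderOp (X a) (V a) (firstOrderOp (X b) (V b) u) y‖) 2 μ
        ≤ ∑ a, ∑ b, lpNorm (firstOrderOp (X a) (V a) (firstOrderOp (X b) (V b) u)) 2 μ := by
    simp only [← Fintype.sum_prod_type']
    exact lpNorm_sum_norm_le one_le_two fun p => hu.memLp_firstOrderOp_firstOrderOp p.1 p.2
  refine (lpNorm_add_le (hu.memLp.norm.add hfirst) one_le_two).trans (add_le_add ?_ hsecond)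
  refine (lpNorm_add_le hu.memLp.norm one_le_two).trans (add_le_add ?_ ?_)
  · exact (lpNorm_norm hu.memLp.aestronglyMeasurable 2).le
  · exact lpNorm_sum_norm_le one_le_two hu.memLp_firstOrderOp

variable [BorelSpace E]

omit [Fintype ι] in
lemma memJetLTwo_of_hasCompactSupport [IsFiniteMeasureOnCompacts μ] (hu : ContDiff ℝ 2 u)
    (hsupp : HasCompactSupport u) : MemJetLTwo X V u μ where
  memLp := hu.continuous.memLp_of_hasCompactSupport hsupp
  memLp_firstOrderOp a :=
    (contDiff_firstOrderOp (m := 1) _ _ hu (by norm_num)).continuous.memLp_of_hasCompactSupport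
      (hasCompactSupport_firstOrderOp _ _ hsupp)
  memLp_firstOrderOp_firstOrderOp a b :=
    (contDiff_firstOrderOp (m := 0) _ _ (contDiff_firstOrderOp (m := 1) _ _ hu (by norm_num))
      (by norm_num)).continuous.memLp_of_hasCompactSupport
      (hasCompactSupport_firstOrderOp _ _ (hasCompactSupport_firstOrderOp _ _ hsupp))

variable [FiniteDimensional ℝ E] [Nontrivial E] [CompleteSpace F]

/-- On the ball of radius `‖x‖ / 2` about `x`, the frame controls the derivatives of `u` at the
length scale of the ball. -/
lemma IsConicalFrame.exists_norm_pow_mul_sq_norm_le (hX : IsConicalFrame X)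
    (hE : Module.finrank ℝ E ≤ 3) (V : ι → F →L[ℝ] F) (μ : Measure E) [μ.IsAddHaarMeasure] :
    ∃ C > 0, ∀ u : E → F, ContDiff ℝ 2 u → Integrable (fun y => jetSize X V u y ^ 2) μ → ∀ x,
      ‖x‖ ^ Module.finrank ℝ E * ‖u x‖ ^ 2 ≤ C * ∫ y, jetSize X V u y ^ 2 ∂μ := by
  obtain ⟨C₁, hC₁, hdensity⟩ := hX.exists_sobolevDensity_le V
  set d := Module.finrank ℝ E
  set σ := μ.toSphere.real Set.univ
  have : NeZero μ.toSphere := ⟨μ.toSphere_ne_zero⟩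
  have hσ : 0 < σ := measureReal_univ_pos
  refine ⟨2 ^ d * (48 * C₁) / σ, by positivity, fun u hu hint x => ?_⟩
  rcases eq_or_ne x 0 with rfl | hx
  · rw [norm_zero, zero_pow Module.finrank_pos.ne', zero_mul]
    positivity
  have hR : 0 < ‖x‖ / 2 := by positivity
  have hball : ∀ y ∈ Metric.ball x (‖x‖ / 2), ‖x‖ / 2 ≤ ‖y‖ := by
    intro y hy
    linarith [norm_sub_norm_le x y, mem_ball_iff_norm'.1 hy]
  have henergy : ∫ y in Metric.ball x (‖x‖ / 2), sobolevDensity (‖x‖ / 2) u y ∂μ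
      ≤ C₁ * ∫ y, jetSize X V u y ^ 2 ∂μ := by
    calc _ ≤ ∫ y in Metric.ball x (‖x‖ / 2), C₁ * jetSize X V u y ^ 2 ∂μ := by
          refine setIntegral_mono_on ?_ (hint.const_mul C₁).integrableOn measurableSet_ball
            fun y hy => hdensity u hu _ y hR.le (hball y hy)
          exact ((continuous_sobolevDensity hu _).locallyIntegrable.integrableOn_isCompact
            (isCompact_closedBall x _)).mono_set Metric.ball_subset_closedBall
      _ ≤ ∫ y, C₁ * jetSize X V u y ^ 2 ∂μ :=
          setIntegral_le_integral (hint.const_mul C₁) (.of_forall fun y => by positivity)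
      _ = _ := integral_const_mul _ _
  rw [div_mul_eq_mul_div, le_div_iff₀ hσ]
  calc ‖x‖ ^ d * ‖u x‖ ^ 2 * σ = 2 ^ d * (σ * ((‖x‖ / 2) ^ d * ‖u x‖ ^ 2)) := by
        rw [div_pow]
        field_simp
    _ ≤ 2 ^ d * (48 * (C₁ * ∫ y, jetSize X V u y ^ 2 ∂μ)) := by
        refine mul_le_mul_of_nonneg_left ?_ (by positivity)
        exact (toSphere_real_mul_sq_norm_le_setIntegral_ball μ hE hu x hR).trans (by gcongr)
    _ = _ := by ring

theorem IsConicalFrame.exists_norm_rpow_mul_norm_le (hX : IsConicalFrame X)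
    (hE : Module.finrank ℝ E ≤ 3) (V : ι → F →L[ℝ] F) (μ : Measure E) [μ.IsAddHaarMeasure] :
    ∃ C > 0, ∀ u : E → F, ContDiff ℝ 2 u → MemJetLTwo X V u μ → ∀ x,
      ‖x‖ ^ (Module.finrank ℝ E / 2 : ℝ) * ‖u x‖ ≤ C * jetNorm X V u μ := by
  obtain ⟨C, hC, hbound⟩ := hX.exists_norm_pow_mul_sq_norm_le hE V μ
  refine ⟨√C, by positivity, fun u hu hjet x => ?_⟩
  refine le_of_sq_le_sq ?_ (mul_nonneg (by positivity) jetNorm_nonneg)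
  calc (‖x‖ ^ (Module.finrank ℝ E / 2 : ℝ) * ‖u x‖) ^ 2
      = ‖x‖ ^ Module.finrank ℝ E * ‖u x‖ ^ 2 := by
        rw [mul_pow, ← Real.rpow_mul_natCast (norm_nonneg x), Nat.cast_ofNat,
          div_mul_cancel₀ _ two_ne_zero, Real.rpow_natCast]
    _ ≤ C * ∫ y, jetSize X V u y ^ 2 ∂μ := hbound u hu hjet.memLp_jetSize.integrable_sq x
    _ = C * lpNorm (jetSize X V u) 2 μ ^ 2 := by
        simp only [sq_lpNorm_two_eq hjet.memLp_jetSize.aestronglyMeasurable, Real.norm_eq_abs,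
          sq_abs]
    _ ≤ C * jetNorm X V u μ ^ 2 :=
        mul_le_mul_of_nonneg_left
          (pow_le_pow_left₀ lpNorm_nonneg hjet.lpNorm_jetSize_le 2) hC.le
    _ = (√C * jetNorm X V u μ) ^ 2 := by rw [mul_pow, Real.sq_sqrt hC.le]

end WeightedSobolev

section RotationScalingFrame

open scoped RealInnerProductSpace

/-- The cross-product field `y ↦ e_i × y`, which generates the rotations about the `i`-th axis. -/
def rotationField (i : Fin 3) : E3 →L[ℝ] E3 :=
  (EuclideanSpace.proj (i + 1)).smulRight (EuclideanSpace.single (i + 2) 1)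
    - (EuclideanSpace.proj (i + 2)).smulRight (EuclideanSpace.single (i + 1) 1)

/-- The three rotation fields `some i` and the scaling field `none`. -/
def rotationScalingField : Option (Fin 3) → E3 →L[ℝ] E3
  | none => ContinuousLinearMap.id ℝ E3
  | some i => rotationField i

lemma norm_sq_eq_add (y : E3) : ‖y‖ ^ 2 = y 0 ^ 2 + y 1 ^ 2 + y 2 ^ 2 := by
  rw [EuclideanSpace.real_norm_sq_eq, Fin.sum_univ_three]

lemma norm_rotationField_le (i : Fin 3) (y : E3) : ‖rotationField i y‖ ≤ ‖y‖ := by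
  refine le_of_sq_le_sq ?_ (norm_nonneg y)
  have hnorm : ‖rotationField i y‖ ^ 2 + y i ^ 2 = ‖y‖ ^ 2 := by
    rw [norm_sq_eq_add, norm_sq_eq_add]
    fin_cases i <;> simp [rotationField] <;> ring
  linarith [sq_nonneg (y i)]

lemma sq_norm_smul_eq_sum_inner_smul (y v : E3) :
    ‖y‖ ^ 2 • v = ∑ a, ⟪rotationScalingField a y, v⟫ • rotationScalingField a y := by
  ext k
  rw [norm_sq_eq_add]
  fin_cases k <;>
    simp [Fintype.sum_option, Fin.sum_univ_three, rotationScalingField, rotationField,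
      PiLp.inner_apply] <;> ring

lemma isConicalFrame_rotationScalingField : IsConicalFrame rotationScalingField := by
  refine fun y v => ⟨fun a => ⟪rotationScalingField a y, v⟫, fun a => ?_,
    sq_norm_smul_eq_sum_inner_smul y v⟩
  have hfield : ‖rotationScalingField a y‖ ≤ ‖y‖ := by
    cases a with
    | none => exact le_rfl
    | some i => exact norm_rotationField_le i y
  exact (abs_real_inner_le_norm _ _).trans (by gcongr)

lemma fderiv_apply_eq_sum_pd (f : E3 → ℝ) (x v : E3) :
    fderiv ℝ f x v = ∑ k, v k * pd k f x := by
  conv_lhs => rw [← (EuclideanSpace.basisFun (Fin 3) ℝ).sum_repr v]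
  simp [pd]

lemma angOp_eq_fderiv_s6 (i : Fin 3) (f : E3 → ℝ) (x : E3) :
    angOp i f x = fderiv ℝ f x (rotationField i x) := by
  simp [angOp, pd, rotationField]

end RotationScalingFrame

section ModifiedOperators

/-- The zeroth-order parts of `Ω̃_i = Ω_i + V^i` and of `S₀` on vector fields. -/
def vectorCoeff : Option (Fin 3) → (Fin 3 → ℝ) →L[ℝ] (Fin 3 → ℝ)
  | none => 0
  | some i => (Vmat i).mulVecLin.toContinuousLinearMap

/-- The zeroth-order parts of `Ω̃_i = Ω_i + [V^i, ·]` and of `S₀` on matrix fields. -/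
def matrixCoeff : Option (Fin 3) → (Fin 3 → Fin 3 → ℝ) →L[ℝ] (Fin 3 → Fin 3 → ℝ)
  | none => 0
  | some i => LinearMap.toContinuousLinearMap ((Matrix.ofLinearEquiv ℝ).symm.conj
      (LinearMap.mulLeft ℝ (Vmat i) - LinearMap.mulRight ℝ (Vmat i)))

/-- The position of `Ω̃_i` (`some i`) and `S₀` (`none`) in the list `Λ`. -/
def lamIndex : Option (Fin 3) ↪ Fin 7 where
  toFun
    | none => 6
    | some i => ⟨i + 3, by omega⟩
  inj' := by decide

lemma lamV_lamIndex {u : VF3} (hu : Differentiable ℝ u) (a : Option (Fin 3)) :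
    lamV (lamIndex a) u = firstOrderOp (rotationScalingField a) (vectorCoeff a) u := by
  ext x j
  have hcomp (v : E3) : fderiv ℝ u x v j = fderiv ℝ (fun y => u y j) x v := by
    rw [fderiv_apply (hu x) j]
    rfl
  rw [firstOrderOp, Pi.add_apply, hcomp]
  cases a with
  | none => simp [lamV, lamIndex, rotationScalingField, vectorCoeff, fderiv_apply_eq_sum_pd]
  | some i =>
    simp [lamV, lamIndex, rotationScalingField, vectorCoeff, angOp_eq_fderiv_s6, Matrix.mulVec,
      dotProduct]

lemma lamM_lamIndex {G : MF3} (hG : Differentiable ℝ G) (a : Option (Fin 3)) :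
    lamM (lamIndex a) G = firstOrderOp (rotationScalingField a) (matrixCoeff a) G := by
  ext x j k
  have hcomp (v : E3) : fderiv ℝ G x v j k = fderiv ℝ (fun y => G y j k) x v := by
    rw [fderiv_apply (differentiableAt_pi.1 (hG x) j) k, fderiv_apply (hG x) j]
    rfl
  rw [firstOrderOp, Pi.add_apply, Pi.add_apply, hcomp]
  cases a with
  | none => simp [lamM, lamIndex, rotationScalingField, matrixCoeff, fderiv_apply_eq_sum_pd]
  | some i =>
    simp [lamM, lamIndex, rotationScalingField, matrixCoeff, angOp_eq_fderiv_s6, Matrix.mul_apply,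
      LinearEquiv.conj_apply]

end ModifiedOperators

section FieldNorms

lemma lpNorm_two_le_rpow_integral {α F : Type*} [MeasurableSpace α] {μ : Measure α}
    [NormedAddCommGroup F] {f : α → F} (hf : AEStronglyMeasurable f μ) {q : α → ℝ}
    (hq : Integrable q μ) (hfq : ∀ y, ‖f y‖ ^ 2 ≤ q y) :
    lpNorm f 2 μ ≤ (∫ y, q y ∂μ) ^ (1 / 2 : ℝ) := by
  rw [lpNorm_two_eq hf]
  refine Real.rpow_le_rpow (by positivity) ?_ (by norm_num)
  exact integral_mono_of_nonneg (.of_forall fun y => by positivity) hq (.of_forall hfq)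

lemma sq_pi_norm_le_sum {ι G : Type*} [Fintype ι] [SeminormedAddCommGroup G] (w : ι → G) :
    ‖w‖ ^ 2 ≤ ∑ j, ‖w j‖ ^ 2 := by
  have hsqrt : ‖w‖ ≤ √(∑ j, ‖w j‖ ^ 2) :=
    (pi_norm_le_iff_of_nonneg (Real.sqrt_nonneg _)).2 fun i => Real.le_sqrt_of_sq_le
      (Finset.single_le_sum (f := fun j => ‖w j‖ ^ 2) (fun _ _ => by positivity)
        (Finset.mem_univ i))
  exact (pow_le_pow_left₀ (norm_nonneg w) hsqrt 2).trans_eq (Real.sq_sqrt (by positivity))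

lemma lpNorm_le_l2V {u : VF3} (hu : Continuous u) (hsupp : HasCompactSupport u) :
    lpNorm u 2 volume ≤ l2V u := by
  refine lpNorm_two_le_rpow_integral hu.aestronglyMeasurable ?_ fun y => ?_
  · exact ((by fun_prop : Continuous fun w : Fin 3 → ℝ => ∑ j, w j ^ 2).comp
      hu).integrable_of_hasCompactSupport (hsupp.comp_left (by simp))
  · simpa using sq_pi_norm_le_sum (u y)

lemma lpNorm_le_l2M {G : MF3} (hG : Continuous G) (hsupp : HasCompactSupport G) :
    lpNorm G 2 volume ≤ l2M G := by
  refine lpNorm_two_le_rpow_integral hG.aestronglyMeasurable ?_ fun y => ?_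
  · exact ((by fun_prop : Continuous fun w : Fin 3 → Fin 3 → ℝ => ∑ j, ∑ k, w j k ^ 2).comp
      hG).integrable_of_hasCompactSupport (hsupp.comp_left (by simp))
  · refine (sq_pi_norm_le_sum (G y)).trans (Finset.sum_le_sum fun j _ => ?_)
    simpa using sq_pi_norm_le_sum (G y j)

lemma l2V_nonneg (u : VF3) : 0 ≤ l2V u :=
  Real.rpow_nonneg (integral_nonneg fun _ => by positivity) _

lemma l2M_nonneg (G : MF3) : 0 ≤ l2M G :=
  Real.rpow_nonneg (integral_nonneg fun _ => by positivity) _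

lemma sum2V_nonneg (u : VF3) : 0 ≤ sum2V u :=
  add_nonneg (add_nonneg (l2V_nonneg _) (Finset.sum_nonneg fun _ _ => l2V_nonneg _))
    (Finset.sum_nonneg fun _ _ => Finset.sum_nonneg fun _ _ => l2V_nonneg _)

lemma sum2M_nonneg (G : MF3) : 0 ≤ sum2M G :=
  add_nonneg (add_nonneg (l2M_nonneg _) (Finset.sum_nonneg fun _ _ => l2M_nonneg _))
    (Finset.sum_nonneg fun _ _ => Finset.sum_nonneg fun _ _ => l2M_nonneg _)

end FieldNorms

section Decay

lemma sum_comp_le_sum {ι κ : Type*} [Fintype ι] [Fintype κ] (e : ι ↪ κ) {f : κ → ℝ}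
    (hf : ∀ b, 0 ≤ f b) : ∑ a, f (e a) ≤ ∑ b, f b := by
  rw [← Finset.sum_map Finset.univ e f]
  exact Finset.sum_le_univ_sum_of_nonneg hf

lemma jetNorm_le_of_eq_firstOrderOp {E F ι κ : Type*} [NormedAddCommGroup E] [NormedSpace ℝ E]
    [NormedAddCommGroup F] [NormedSpace ℝ F] [MeasurableSpace E] [Fintype ι] [Fintype κ]
    {X : ι → E →L[ℝ] E} {V : ι → F →L[ℝ] F} {μ : Measure E} (e : ι ↪ κ)
    {L : κ → (E → F) → E → F}
    (hL : ∀ a v, Differentiable ℝ v → L (e a) v = firstOrderOp (X a) (V a) v)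
    {N : (E → F) → ℝ} (hN₀ : ∀ v, 0 ≤ N v)
    (hN : ∀ v, Continuous v → HasCompactSupport v → lpNorm v 2 μ ≤ N v)
    {u : E → F} (hu : ContDiff ℝ 2 u) (hsupp : HasCompactSupport u) :
    jetNorm X V u μ ≤ N u + ∑ a, N (L a u) + ∑ a, ∑ b, N (L a (L b u)) := by
  have h1 (a : ι) : ContDiff ℝ 1 (firstOrderOp (X a) (V a) u) :=
    contDiff_firstOrderOp _ _ hu (by norm_num)
  have s1 (a : ι) : HasCompactSupport (firstOrderOp (X a) (V a) u) :=
    hasCompactSupport_firstOrderOp _ _ hsupp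
  have hfirst : ∑ a, lpNorm (firstOrderOp (X a) (V a) u) 2 μ ≤ ∑ a, N (L a u) := by
    refine le_trans (Finset.sum_le_sum fun a _ => ?_) (sum_comp_le_sum e fun a => hN₀ (L a u))
    rw [hL a u (hu.differentiable (by norm_num))]
    exact hN _ (h1 a).continuous (s1 a)
  have hsecond : ∑ a, ∑ b, lpNorm (firstOrderOp (X a) (V a) (firstOrderOp (X b) (V b) u)) 2 μ
      ≤ ∑ a, ∑ b, N (L a (L b u)) := by
    refine le_trans (Finset.sum_le_sum fun a _ => ?_)
      (sum_comp_le_sum e fun a => Finset.sum_nonneg fun b _ => hN₀ (L a (L b u)))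
    refine le_trans (Finset.sum_le_sum fun b _ => ?_)
      (sum_comp_le_sum e fun b => hN₀ (L (e a) (L b u)))
    rw [hL b u (hu.differentiable (by norm_num)), hL a _ ((h1 b).differentiable (by norm_num))]
    exact hN _ (contDiff_firstOrderOp (m := 0) _ _ (h1 b) (by norm_num)).continuous
      (hasCompactSupport_firstOrderOp _ _ (s1 b))
  exact add_le_add (add_le_add (hN u hu.continuous hsupp) hfirst) hsecond

lemma exists_norm_rpow_mul_norm_le_sum {F : Type*} [NormedAddCommGroup F] [NormedSpace ℝ F]
    [CompleteSpace F] (V : Option (Fin 3) → F →L[ℝ] F) {L : Fin 7 → (E3 → F) → E3 → F}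
    (hL : ∀ a v, Differentiable ℝ v →
      L (lamIndex a) v = firstOrderOp (rotationScalingField a) (V a) v)
    {N : (E3 → F) → ℝ} (hN₀ : ∀ v, 0 ≤ N v)
    (hN : ∀ v, Continuous v → HasCompactSupport v → lpNorm v 2 volume ≤ N v) :
    ∃ C > 0, ∀ u : E3 → F, ContDiff ℝ 2 u → HasCompactSupport u → ∀ x,
      ‖x‖ ^ (3 / 2 : ℝ) * ‖u x‖ ≤ C * (N u + ∑ a, N (L a u) + ∑ a, ∑ b, N (L a (L b u))) := by
  obtain ⟨C, hC, hbound⟩ :=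
    isConicalFrame_rotationScalingField.exists_norm_rpow_mul_norm_le (by simp) V volume
  refine ⟨C, hC, fun u hu hsupp x => ?_⟩
  calc ‖x‖ ^ (3 / 2 : ℝ) * ‖u x‖ ≤ C * jetNorm rotationScalingField V u volume := by
        simpa using hbound u hu (memJetLTwo_of_hasCompactSupport hu hsupp) x
    _ ≤ _ := by
        gcongr
        exact jetNorm_le_of_eq_firstOrderOp lamIndex hL hN₀ hN hu hsupp

theorem exists_norm_rpow_mul_norm_le_sum2V :
    ∃ C > 0, ∀ u : VF3, ContDiff ℝ 2 u → HasCompactSupport u → ∀ x,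
      ‖x‖ ^ (3 / 2 : ℝ) * ‖u x‖ ≤ C * sum2V u :=
  exists_norm_rpow_mul_norm_le_sum vectorCoeff (fun a _ hu => lamV_lamIndex hu a) l2V_nonneg
    fun _ => lpNorm_le_l2V

theorem exists_norm_rpow_mul_norm_le_sum2M :
    ∃ C > 0, ∀ G : MF3, ContDiff ℝ 2 G → HasCompactSupport G → ∀ x,
      ‖x‖ ^ (3 / 2 : ℝ) * ‖G x‖ ≤ C * sum2M G :=
  exists_norm_rpow_mul_norm_le_sum matrixCoeff (fun a _ hG => lamM_lamIndex hG a) l2M_nonneg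
    fun _ => lpNorm_le_l2M

lemma abs_sum_mul_le {w : E3} (hw : ‖w‖ ≤ 1) (z : Fin 3 → ℝ) : |∑ i, w i * z i| ≤ 3 * ‖z‖ := by
  calc |∑ i, w i * z i| ≤ ∑ i : Fin 3, 1 * ‖z‖ := by
        refine Finset.abs_sum_le_sum_abs _ _ |>.trans (Finset.sum_le_sum fun i _ => ?_)
        rw [abs_mul]
        exact mul_le_mul ((PiLp.norm_apply_le w i).trans hw) (norm_le_pi_norm z i) (by positivity)
          zero_le_one
    _ = 3 * ‖z‖ := by simp

theorem radial_component_decay_general :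
    ∃ C > 0,
      (∀ u : VF3, ContDiff ℝ 2 u → HasCompactSupport u → ∀ x w : E3, ‖w‖ ≤ 1 →
        ‖x‖ ^ ((3 : ℝ) / 2) * |∑ i, w i * u x i| ≤ C * sum2V u) ∧
      (∀ G : MF3, ContDiff ℝ 2 G → HasCompactSupport G → ∀ x w : E3, ‖w‖ ≤ 1 → ∀ j : Fin 3,
        ‖x‖ ^ ((3 : ℝ) / 2) * |∑ i, w i * G x i j| ≤ C * sum2M G) := by
  obtain ⟨Cv, hCv, hv⟩ := exists_norm_rpow_mul_norm_le_sum2V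
  obtain ⟨Cm, hCm, hm⟩ := exists_norm_rpow_mul_norm_le_sum2M
  refine ⟨3 * (Cv + Cm), by positivity, fun u hu hsupp x w hw => ?_,
    fun G hG hsupp x w hw j => ?_⟩
  · calc ‖x‖ ^ ((3 : ℝ) / 2) * |∑ i, w i * u x i| ≤ ‖x‖ ^ ((3 : ℝ) / 2) * (3 * ‖u x‖) := by
          gcongr
          exact abs_sum_mul_le hw _
      _ ≤ 3 * (Cv * sum2V u) := by linarith [hv u hu hsupp x]
      _ ≤ 3 * (Cv + Cm) * sum2V u := by linarith [mul_nonneg hCm.le (sum2V_nonneg u)]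
  · have hcolumn : ‖fun i => G x i j‖ ≤ ‖G x‖ :=
      (pi_norm_le_iff_of_nonneg (norm_nonneg _)).2 fun i =>
        (norm_le_pi_norm (G x i) j).trans (norm_le_pi_norm (G x) i)
    calc ‖x‖ ^ ((3 : ℝ) / 2) * |∑ i, w i * G x i j| ≤ ‖x‖ ^ ((3 : ℝ) / 2) * (3 * ‖G x‖) := by
          gcongr
          exact (abs_sum_mul_le hw fun i => G x i j).trans (by gcongr)
      _ ≤ 3 * (Cm * sum2M G) := by linarith [hm G hG hsupp x]
      _ ≤ 3 * (Cv + Cm) * sum2M G := by linarith [mul_nonneg hCv.le (sum2M_nonneg G)]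

end Decay

/-- there is a constant `C > 0` such that (i) for divergence-free
`u ∈ C_c^∞(ℝ³;ℝ³)` and `x ≠ 0`, `|x|^{3/2} |ω·u(x)| ≤ C Σ_{|α|≤2} ‖Λ^α u‖_{L²}`, and
(ii) for `G ∈ C_c^∞(ℝ³;M₃(ℝ))` with `∂_m G_{mj} = 0` and `x ≠ 0`, for each `j`,
`|x|^{3/2} |ω_i G_{ij}(x)| ≤ C Σ_{|α|≤2} ‖Λ^α G‖_{L²}`, where `ω = x/|x|`. -/
theorem radial_component_decay :
    ∃ C > 0,
      (∀ u : VF3, ContDiff ℝ (⊤ : ℕ∞) u → HasCompactSupport u →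
        (∀ x : E3, ∑ j, pd j (fun y => u y j) x = 0) →
        ∀ x : E3, x ≠ 0 →
          ‖x‖ ^ ((3 : ℝ) / 2) * |∑ i, (x i / ‖x‖) * u x i| ≤ C * sum2V u) ∧
      (∀ G : MF3, ContDiff ℝ (⊤ : ℕ∞) G → HasCompactSupport G →
        (∀ x : E3, ∀ j : Fin 3, ∑ m, pd m (fun y => G y m j) x = 0) →
        ∀ x : E3, x ≠ 0 → ∀ j : Fin 3,
          ‖x‖ ^ ((3 : ℝ) / 2) * |∑ i, (x i / ‖x‖) * G x i j| ≤ C * sum2M G) := by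
  obtain ⟨C, hC, hv, hm⟩ := radial_component_decay_general
  refine ⟨C, hC, fun u hu hs _ x hx => ?_, fun G hG hs _ x hx j => ?_⟩ <;>
    have hw : ‖‖x‖⁻¹ • x‖ ≤ 1 := by simp [norm_smul, hx]
  · simpa [div_eq_inv_mul] using hv u (contDiff_infty.1 hu 2) hs x _ hw
  · simpa [div_eq_inv_mul] using hm G (contDiff_infty.1 hG 2) hs x _ hw j

end
end

section
/- Let G ∈ C_c^∞(ℝ³; M₃(ℝ)) satisfy the constraint ∂_k G_{ij} − ∂_j G_{ik} = G_{lj}∂_l G_{ik} − G_{lk}∂_l G_{ij} for all i, j, k (summation over l). Then for every t ∈ ℝ, writing r = |x|: ‖(t−r)∇G‖² ≤ 8‖G‖² + 3‖(t−r)∇·G‖² + 2Q, where (∇·G)_i = ∂_j G_{ij}, ‖∇G‖² = ∫ Σ_{i,j,k} (∂_j G_{ik})² dx, and Q = ∫_{ℝ³} (t−r)² ∂_j G_{ik} ( G_{lk}∂_l G_{ij} − G_{lj}∂_l G_{ik} ) dx (summation over all repeated indices). -/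
/-!
The flux `Φ_j = ∑ k, (u_k ∂_k u_j - u_j ∂_k u_k)` of a vector field `u` satisfies
`∇·Φ = ∑ j, ∑ k, ∂_j u_k ∂_k u_j - (∇·u)²`: the second derivatives cancel by symmetry. Hence
`|∇u|² = ∑ j, ∑ k, ∂_j u_k (∂_j u_k - ∂_k u_j) + (∇·u)² + ∇·Φ`. Integrating against `f²` for a
Lipschitz weight `f` and moving the divergence onto `f²` leaves `-2 f ∇f · Φ`, which is linear in
`∇u`, so by Young's inequality half of `f² |∇u|²` can be absorbed into the left-hand side. The
constraint identifies the antisymmetrized gradient of each row of `G` with the quadratic term in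
`Q`, and `t - ‖x‖` is a `1`-Lipschitz weight.
-/

open MeasureTheory

noncomputable section

open scoped NNReal

section LipschitzWeight

theorem exists_lipschitzWith_mul_of_hasCompactSupport {X : Type*} [PseudoMetricSpace X]
    {f φ : X → ℝ} {K L : ℝ≥0} (hf : LipschitzWith K f) (hφ : LipschitzWith L φ)
    (hsupp : HasCompactSupport φ) : ∃ C, LipschitzWith C fun x => f x * φ x := by
  obtain ⟨A, hA⟩ := hsupp.isCompact.exists_bound_of_continuousOn hf.continuous.continuousOn
  obtain ⟨B, hB⟩ := hφ.continuous.bounded_above_of_compact_support hsupp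
  have near_support : ∀ x ∈ tsupport φ, ∀ y,
      dist (f x * φ x) (f y * φ y) ≤ (A * L + K * B).toNNReal * dist x y := by
    intro x hx y
    calc dist (f x * φ x) (f y * φ y)
        = ‖f x * (φ x - φ y) + (f x - f y) * φ y‖ := by rw [Real.dist_eq, Real.norm_eq_abs]; ring_nf
      _ ≤ ‖f x‖ * dist (φ x) (φ y) + dist (f x) (f y) * ‖φ y‖ := by
        simpa only [norm_mul, dist_eq_norm] using
          norm_add_le (f x * (φ x - φ y)) ((f x - f y) * φ y)
      _ ≤ A * (L * dist x y) + K * dist x y * B := by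
        have hA_nonneg : 0 ≤ A := (norm_nonneg _).trans (hA x hx)
        gcongr
        exacts [hA x hx, hφ.dist_le_mul x y, hf.dist_le_mul x y, hB y]
      _ = (A * L + K * B) * dist x y := by ring
      _ ≤ (A * L + K * B).toNNReal * dist x y := by gcongr; exact Real.le_coe_toNNReal _
  refine ⟨(A * L + K * B).toNNReal, .of_dist_le_mul fun x y => ?_⟩
  by_cases hx : x ∈ tsupport φ
  · exact near_support x hx y
  by_cases hy : y ∈ tsupport φ
  · simpa only [dist_comm] using near_support y hy x
  · simp only [image_eq_zero_of_notMem_tsupport hx, image_eq_zero_of_notMem_tsupport hy, mul_zero,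
      dist_self]
    positivity

variable {E : Type*} [NormedAddCommGroup E] [NormedSpace ℝ E] [MeasurableSpace E] [BorelSpace E]
  {μ : Measure E} {f φ : E → ℝ} {K : ℝ≥0}

theorem integrable_fderiv_mul_of_lipschitzWith (hf : LipschitzWith K f) (hφ : Integrable φ μ)
    (v : E) : Integrable (fun x => fderiv ℝ f x v * φ x) μ :=
  hφ.bdd_mul (c := K * ‖v‖) (measurable_fderiv_apply_const ℝ f v).aestronglyMeasurable
    (.of_forall fun x => (fderiv ℝ f x).le_of_opNorm_le (norm_fderiv_le_of_lipschitz ℝ hf) v)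

variable [FiniteDimensional ℝ E] [μ.IsAddHaarMeasure]

theorem integral_fderiv_mul_of_lipschitzWith {L : ℝ≥0} (hf : LipschitzWith K f)
    (hφ : LipschitzWith L φ) (hsupp : HasCompactSupport φ) (v : E) :
    ∫ x, fderiv ℝ f x v * φ x ∂μ = -∫ x, fderiv ℝ φ x v * f x ∂μ := by
  calc ∫ x, fderiv ℝ f x v * φ x ∂μ = ∫ x, lineDeriv ℝ f x v * φ x ∂μ := by
        refine integral_congr_ae ?_
        filter_upwards [hf.ae_differentiableAt] with x hx
        rw [hx.lineDeriv_eq_fderiv]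
    _ = ∫ x, lineDeriv ℝ φ x (-v) * f x ∂μ := hf.integral_lineDeriv_mul_eq hφ hsupp v
    _ = ∫ x, -(fderiv ℝ φ x v * f x) ∂μ := by
        refine integral_congr_ae ?_
        filter_upwards [hφ.ae_differentiableAt] with x hx
        rw [hx.lineDeriv_eq_fderiv, map_neg, neg_mul]
    _ = -∫ x, fderiv ℝ φ x v * f x ∂μ := integral_neg _

theorem integral_sq_mul_fderiv_of_lipschitzWith (hf : LipschitzWith K f) (hφ : ContDiff ℝ 1 φ)
    (hsupp : HasCompactSupport φ) (v : E) :
    ∫ x, f x ^ 2 * fderiv ℝ φ x v ∂μ = -∫ x, fderiv ℝ f x v * (2 * f x * φ x) ∂μ := by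
  have hf_cont := hf.continuous
  have hφ_cont := hφ.continuous
  have hφ'_cont : Continuous fun x => fderiv ℝ φ x v :=
    (hφ.continuous_fderiv one_ne_zero).clm_apply continuous_const
  obtain ⟨L, hL⟩ := hφ.lipschitzWith_of_hasCompactSupport hsupp one_ne_zero
  obtain ⟨C, hC⟩ := exists_lipschitzWith_mul_of_hasCompactSupport hf hL hsupp
  have integrable_left : Integrable (fun x => fderiv ℝ f x v * (f x * φ x)) μ :=
    integrable_fderiv_mul_of_lipschitzWith hf
      (Continuous.integrable_of_hasCompactSupport (by fun_prop) hsupp.mul_left) v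
  have integrable_right : Integrable (fun x => f x ^ 2 * fderiv ℝ φ x v) μ :=
    ((hf_cont.pow 2).mul hφ'_cont).integrable_of_hasCompactSupport
      (hsupp.fderiv_apply ℝ v).mul_left
  -- Integrating `f` by parts against `f * φ` keeps all factors Lipschitz; `f ^ 2` need not be.
  have hparts := integral_fderiv_mul_of_lipschitzWith (μ := μ) hf hC hsupp.mul_left v
  have product_rule : ∀ᵐ x ∂μ, fderiv ℝ (fun y => f y * φ y) x v * f x =
      fderiv ℝ f x v * (f x * φ x) + f x ^ 2 * fderiv ℝ φ x v := by
    filter_upwards [hf.ae_differentiableAt] with x hx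
    rw [fderiv_fun_mul hx (hφ.differentiable one_ne_zero x)]
    simp only [add_apply, smul_apply, smul_eq_mul]
    ring
  have double : ∫ x, fderiv ℝ f x v * (2 * f x * φ x) ∂μ =
      2 * ∫ x, fderiv ℝ f x v * (f x * φ x) ∂μ := by
    rw [← integral_const_mul]
    exact integral_congr_ae (.of_forall fun x => by ring)
  rw [integral_congr_ae product_rule, integral_add integrable_left integrable_right] at hparts
  linarith

end LipschitzWeight

section PartialDeriv

variable {ι : Type*} [DecidableEq ι]

/-- The partial derivative `∂_j u` of a scalar function on `ℝ^ι`; `pd` is the case `ι = Fin 3`. -/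
def partialDeriv (j : ι) (u : EuclideanSpace ℝ ι → ℝ) (x : EuclideanSpace ℝ ι) : ℝ :=
  fderiv ℝ u x (EuclideanSpace.single j 1)

section Finite

variable [Finite ι] {u v : EuclideanSpace ℝ ι → ℝ} {x : EuclideanSpace ℝ ι}

theorem partialDeriv_mul (hu : DifferentiableAt ℝ u x) (hv : DifferentiableAt ℝ v x) (j : ι) :
    partialDeriv j (fun y => u y * v y) x =
      u x * partialDeriv j v x + v x * partialDeriv j u x := by
  cases nonempty_fintype ι
  simp [partialDeriv, fderiv_fun_mul hu hv]

theorem partialDeriv_sub (hu : DifferentiableAt ℝ u x) (hv : DifferentiableAt ℝ v x) (j : ι) :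
    partialDeriv j (fun y => u y - v y) x = partialDeriv j u x - partialDeriv j v x := by
  cases nonempty_fintype ι
  simp [partialDeriv, fderiv_fun_sub hu hv]

theorem partialDeriv_sum {κ : Type*} {s : Finset κ} {w : κ → EuclideanSpace ℝ ι → ℝ}
    (hw : ∀ k ∈ s, DifferentiableAt ℝ (w k) x) (j : ι) :
    partialDeriv j (fun y => ∑ k ∈ s, w k y) x = ∑ k ∈ s, partialDeriv j (w k) x := by
  cases nonempty_fintype ι
  simp [partialDeriv, fderiv_fun_sum hw]

end Finite

variable [Fintype ι]

theorem contDiff_partialDeriv {m n : WithTop ℕ∞} {u : EuclideanSpace ℝ ι → ℝ}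
    (hu : ContDiff ℝ n u) (hmn : m + 1 ≤ n) (j : ι) : ContDiff ℝ m (partialDeriv j u) :=
  (hu.fderiv_right hmn).clm_apply contDiff_const

theorem partialDeriv_comm {u : EuclideanSpace ℝ ι → ℝ} (hu : ContDiff ℝ 2 u) (j k : ι)
    (x : EuclideanSpace ℝ ι) :
    partialDeriv j (partialDeriv k u) x = partialDeriv k (partialDeriv j u) x := by
  have second_fderiv (a b : ι) : partialDeriv a (partialDeriv b u) x =
      fderiv ℝ (fderiv ℝ u) x (EuclideanSpace.single a 1) (EuclideanSpace.single b 1) := by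
    have hd : DifferentiableAt ℝ (fderiv ℝ u) x :=
      (hu.fderiv_right (m := 1) (by norm_num)).differentiable one_ne_zero x
    change fderiv ℝ (fun y => fderiv ℝ u y (EuclideanSpace.single b 1)) x _ = _
    simp [fderiv_clm_apply hd (differentiableAt_const _)]
  rw [second_fderiv, second_fderiv, hu.contDiffAt.isSymmSndFDerivAt (by simp)]

end PartialDeriv

section VectorField

variable {ι : Type*} [Fintype ι] [DecidableEq ι]

/-- The divergence `∇·u = ∑ j, ∂_j u_j` of a vector field given by its components. -/
def divergence (u : EuclideanSpace ℝ ι → ι → ℝ) (x : EuclideanSpace ℝ ι) : ℝ :=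
  ∑ j, partialDeriv j (fun y => u y j) x

/-- The squared Frobenius norm `|∇u|²` of the gradient of a vector field. -/
def gradientSq (u : EuclideanSpace ℝ ι → ι → ℝ) (x : EuclideanSpace ℝ ι) : ℝ :=
  ∑ j, ∑ k, partialDeriv j (fun y => u y k) x ^ 2

/-- The squared norm `½ ∑ j, ∑ k, (∂_j u_k - ∂_k u_j)²` of the curl of a vector field. It is encoded
with one factor antisymmetrized, which is the form in which `Q` contains it. -/
def curlSq (u : EuclideanSpace ℝ ι → ι → ℝ) (x : EuclideanSpace ℝ ι) : ℝ :=
  ∑ j, ∑ k, partialDeriv j (fun y => u y k) x *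
    (partialDeriv j (fun y => u y k) x - partialDeriv k (fun y => u y j) x)

/-- The flux `Φ_j = ∑ k, (u_k ∂_k u_j - u_j ∂_k u_k)`, whose divergence is the null Lagrangian
`tr ((∇u)²) - (tr ∇u)²`. -/
def nullLagrangianFlux (u : EuclideanSpace ℝ ι → ι → ℝ) (x : EuclideanSpace ℝ ι) (j : ι) : ℝ :=
  ∑ k, (u x k * partialDeriv k (fun y => u y j) x - u x j * partialDeriv k (fun y => u y k) x)

variable {u : EuclideanSpace ℝ ι → ι → ℝ}

theorem contDiff_nullLagrangianFlux (hu : ContDiff ℝ 2 u) :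
    ContDiff ℝ 1 (nullLagrangianFlux u) := by
  have hcomp (k : ι) : ContDiff ℝ 2 fun y => u y k := contDiff_pi.1 hu k
  have hcomp_one (k : ι) : ContDiff ℝ 1 fun y => u y k := (hcomp k).of_le one_le_two
  have hpartial (j k : ι) : ContDiff ℝ 1 (partialDeriv j fun y => u y k) :=
    contDiff_partialDeriv (hcomp k) one_add_one_eq_two.le j
  exact contDiff_pi.2 fun j => ContDiff.sum fun k _ =>
    ((hcomp_one k).mul (hpartial k j)).sub ((hcomp_one j).mul (hpartial k k))

theorem hasCompactSupport_nullLagrangianFlux (hsupp : HasCompactSupport u) :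
    HasCompactSupport (nullLagrangianFlux u) :=
  .intro hsupp fun x hx => by
    ext j
    simp [nullLagrangianFlux, image_eq_zero_of_notMem_tsupport hx]

theorem divergence_nullLagrangianFlux (hu : ContDiff ℝ 2 u) (x : EuclideanSpace ℝ ι) :
    divergence (nullLagrangianFlux u) x =
      ∑ j, ∑ k, partialDeriv j (fun y => u y k) x * partialDeriv k (fun y => u y j) x -
        divergence u x ^ 2 := by
  have hcomp (k : ι) : ContDiff ℝ 2 fun y => u y k := contDiff_pi.1 hu k
  have hd (k : ι) : DifferentiableAt ℝ (fun y => u y k) x :=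
    (hcomp k).differentiable two_ne_zero x
  have hd' (j k : ι) : DifferentiableAt ℝ (partialDeriv j fun y => u y k) x :=
    (contDiff_partialDeriv (hcomp k) one_add_one_eq_two.le j).differentiable one_ne_zero x
  have expand (j : ι) : partialDeriv j (fun y => nullLagrangianFlux u y j) x =
      ∑ k, (partialDeriv j (fun y => u y k) x * partialDeriv k (fun y => u y j) x -
        partialDeriv j (fun y => u y j) x * partialDeriv k (fun y => u y k) x +
        (u x k * partialDeriv k (partialDeriv j fun y => u y j) x -
          u x j * partialDeriv j (partialDeriv k fun y => u y k) x)) := by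
    unfold nullLagrangianFlux
    rw [partialDeriv_sum fun k _ =>
      ((hd k).fun_mul (hd' k j)).fun_sub ((hd j).fun_mul (hd' k k))]
    refine Finset.sum_congr rfl fun k _ => ?_
    rw [partialDeriv_sub ((hd k).fun_mul (hd' k j)) ((hd j).fun_mul (hd' k k)),
      partialDeriv_mul (hd k) (hd' k j), partialDeriv_mul (hd j) (hd' k k),
      partialDeriv_comm (hcomp j) j k]
    ring
  have second_order_cancel :
      ∑ j, ∑ k, u x k * partialDeriv k (partialDeriv j fun y => u y j) x =
        ∑ j, ∑ k, u x j * partialDeriv j (partialDeriv k fun y => u y k) x :=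
    Finset.sum_comm
  rw [divergence]
  simp_rw [expand, Finset.sum_add_distrib, Finset.sum_sub_distrib]
  rw [second_order_cancel, sub_self, add_zero, divergence, sq, Finset.sum_mul_sum]

theorem gradientSq_eq_curlSq_add (hu : ContDiff ℝ 2 u) (x : EuclideanSpace ℝ ι) :
    gradientSq u x = curlSq u x + divergence u x ^ 2 + divergence (nullLagrangianFlux u) x := by
  rw [divergence_nullLagrangianFlux hu, add_assoc, add_sub_cancel, gradientSq, curlSq]
  simp only [← Finset.sum_add_distrib]
  exact Finset.sum_congr rfl fun j _ => Finset.sum_congr rfl fun k _ => by ring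

theorem integrable_mul_comp_partialDeriv (hu : ContDiff ℝ 1 u) (hsupp : HasCompactSupport u)
    {w : EuclideanSpace ℝ ι → ℝ} (hw : Continuous w) {F : (ι → ℝ) → (ι → ι → ℝ) → ℝ}
    (hF : Continuous fun p : (ι → ℝ) × (ι → ι → ℝ) => F p.1 p.2) (hF_zero : F 0 0 = 0) :
    Integrable fun x => w x * F (u x) fun j k => partialDeriv j (fun y => u y k) x := by
  have hpartial (j k : ι) : Continuous (partialDeriv j fun y => u y k) :=
    (contDiff_partialDeriv (contDiff_pi.1 hu k) (zero_add 1).le j).continuous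
  have hjet : Continuous fun x => (u x, fun j k => partialDeriv j (fun y => u y k) x) :=
    hu.continuous.prodMk (continuous_pi fun j => continuous_pi fun k => hpartial j k)
  refine (hw.mul (hF.comp hjet)).integrable_of_hasCompactSupport (.intro hsupp fun x hx => ?_)
  have hpartial_zero : (fun j k => partialDeriv j (fun y => u y k) x) = 0 := by
    ext j k
    have hxk : x ∉ tsupport fun y => u y k :=
      fun h => hx (tsupport_comp_subset (g := fun a : ι → ℝ => a k) rfl u h)
    simp [partialDeriv, fderiv_of_notMem_tsupport ℝ hxk]
  simp [image_eq_zero_of_notMem_tsupport hx, hpartial_zero, hF_zero]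

theorem integrable_mul_gradientSq (hu : ContDiff ℝ 1 u) (hsupp : HasCompactSupport u)
    {w : EuclideanSpace ℝ ι → ℝ} (hw : Continuous w) : Integrable fun x => w x * gradientSq u x :=
  integrable_mul_comp_partialDeriv hu hsupp hw (F := fun _ M => ∑ j, ∑ k, M j k ^ 2)
    (by fun_prop) (by simp)

theorem integrable_mul_curlSq (hu : ContDiff ℝ 1 u) (hsupp : HasCompactSupport u)
    {w : EuclideanSpace ℝ ι → ℝ} (hw : Continuous w) : Integrable fun x => w x * curlSq u x :=
  integrable_mul_comp_partialDeriv hu hsupp hw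
    (F := fun _ M => ∑ j, ∑ k, M j k * (M j k - M k j)) (by fun_prop) (by simp)

theorem integrable_mul_divergence (hu : ContDiff ℝ 1 u) (hsupp : HasCompactSupport u)
    {w : EuclideanSpace ℝ ι → ℝ} (hw : Continuous w) : Integrable fun x => w x * divergence u x :=
  integrable_mul_comp_partialDeriv hu hsupp hw (F := fun _ M => ∑ j, M j j) (by fun_prop) (by simp)

theorem integrable_mul_divergence_sq (hu : ContDiff ℝ 1 u) (hsupp : HasCompactSupport u)
    {w : EuclideanSpace ℝ ι → ℝ} (hw : Continuous w) :
    Integrable fun x => w x * divergence u x ^ 2 :=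
  integrable_mul_comp_partialDeriv hu hsupp hw (F := fun _ M => (∑ j, M j j) ^ 2) (by fun_prop)
    (by simp)

variable {f : EuclideanSpace ℝ ι → ℝ} {K : ℝ≥0}

theorem integrable_partialDeriv_mul_of_lipschitzWith (hf : LipschitzWith K f) (hu : Continuous u)
    (hsupp : HasCompactSupport u) (j : ι) :
    Integrable fun x => partialDeriv j f x * (2 * f x * u x j) := by
  have hf_cont := hf.continuous
  exact integrable_fderiv_mul_of_lipschitzWith hf
    (Continuous.integrable_of_hasCompactSupport (by fun_prop)
      (hsupp.comp_left (g := fun a : ι → ℝ => a j) rfl).mul_left) _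

theorem integral_sq_mul_divergence (hf : LipschitzWith K f) (hu : ContDiff ℝ 1 u)
    (hsupp : HasCompactSupport u) :
    ∫ x, f x ^ 2 * divergence u x = -∫ x, ∑ j, partialDeriv j f x * (2 * f x * u x j) := by
  have hintegrable (j : ι) : Integrable fun x => f x ^ 2 * partialDeriv j (fun y => u y j) x :=
    integrable_mul_comp_partialDeriv hu hsupp (hf.continuous.pow 2) (F := fun _ M => M j j)
      (by fun_prop) rfl
  simp_rw [divergence, Finset.mul_sum]
  rw [integral_finsetSum _ fun j _ => hintegrable j,
    integral_finsetSum _ fun j _ =>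
      integrable_partialDeriv_mul_of_lipschitzWith hf hu.continuous hsupp j,
    ← Finset.sum_neg_distrib]
  exact Finset.sum_congr rfl fun j _ =>
    integral_sq_mul_fderiv_of_lipschitzWith hf (contDiff_pi.1 hu j)
      (hsupp.comp_left (g := fun a : ι → ℝ => a j) rfl) _

end VectorField

section WeightedEstimate

variable {ι : Type*} [Fintype ι]

theorem neg_sum_mul_flux_le {s c : ℝ} {ω : ι → ℝ} (hω : ∑ j, ω j ^ 2 ≤ c) (a : ι → ℝ)
    (M : ι → ι → ℝ) :
    -∑ j, ω j * (2 * s * ∑ k, (a k * M k j - a j * M k k)) ≤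
      1 / 2 * (s ^ 2 * ∑ j, ∑ k, M j k ^ 2) + 4 * c * ∑ k, a k ^ 2 +
        1 / 2 * (s ^ 2 * (∑ k, M k k) ^ 2) := by
  set d := ∑ k, M k k with hd
  set b := ∑ j, ω j * a j with hb
  have split : -∑ j, ω j * (2 * s * ∑ k, (a k * M k j - a j * M k k)) =
      (∑ j, ∑ k, -2 * (s * M j k) * (a j * ω k)) + 2 * (s * d) * b := by
    rw [Finset.sum_comm (f := fun j k => -2 * (s * M j k) * (a j * ω k)), hb, hd]
    simp_rw [Finset.mul_sum, Finset.sum_mul, ← Finset.sum_add_distrib, ← Finset.sum_neg_distrib]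
    exact Finset.sum_congr rfl fun j _ => Finset.sum_congr rfl fun k _ => by ring
  have young : ∑ j, ∑ k, -2 * (s * M j k) * (a j * ω k) ≤
      ∑ j, ∑ k, (1 / 2 * (s * M j k) ^ 2 + 2 * (a j * ω k) ^ 2) := by
    gcongr with j _ k _
    linarith [sq_nonneg (s * M j k + 2 * (a j * ω k))]
  have factor : ∑ j, ∑ k, (1 / 2 * (s * M j k) ^ 2 + 2 * (a j * ω k) ^ 2) =
      1 / 2 * (s ^ 2 * ∑ j, ∑ k, M j k ^ 2) + 2 * ((∑ j, ω j ^ 2) * ∑ j, a j ^ 2) := by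
    simp_rw [mul_pow, Finset.sum_add_distrib, ← Finset.mul_sum, ← Finset.sum_mul]
    ring
  have cauchy_schwarz : b ^ 2 ≤ (∑ j, ω j ^ 2) * ∑ j, a j ^ 2 :=
    Finset.sum_mul_sq_le_sq_mul_sq _ _ _
  have gradient_bound : (∑ j, ω j ^ 2) * ∑ j, a j ^ 2 ≤ c * ∑ j, a j ^ 2 := by gcongr
  linarith [sq_nonneg (s * d - 2 * b)]

theorem integrable_mul_sum_sq {X : Type*} [TopologicalSpace X] [MeasurableSpace X]
    [OpensMeasurableSpace X] {μ : Measure X} [IsFiniteMeasureOnCompacts μ] {u : X → ι → ℝ}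
    (hu : Continuous u) (hsupp : HasCompactSupport u) {w : X → ℝ} (hw : Continuous w) :
    Integrable (fun x => w x * ∑ k, u x k ^ 2) μ :=
  Continuous.integrable_of_hasCompactSupport (by fun_prop)
    (.intro' hsupp.isCompact (isClosed_tsupport u) fun x hx => by
      simp [image_eq_zero_of_notMem_tsupport hx])

variable [DecidableEq ι] {f : EuclideanSpace ℝ ι → ℝ} {K : ℝ≥0}

theorem sum_sq_partialDeriv_le_of_lipschitzWith (hf : LipschitzWith K f)
    (x : EuclideanSpace ℝ ι) : ∑ j, partialDeriv j f x ^ 2 ≤ (K : ℝ) ^ 2 := by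
  have hnorm := (EuclideanSpace.basisFun ι ℝ).norm_dual (fderiv ℝ f x)
  simp only [EuclideanSpace.basisFun_apply] at hnorm
  calc ∑ j, partialDeriv j f x ^ 2 = ‖fderiv ℝ f x‖ ^ 2 := hnorm.symm
    _ ≤ (K : ℝ) ^ 2 := by gcongr; exact norm_fderiv_le_of_lipschitz ℝ hf

theorem integral_sq_mul_divergence_nullLagrangianFlux_le {u : EuclideanSpace ℝ ι → ι → ℝ}
    (hf : LipschitzWith K f) (hu : ContDiff ℝ 2 u) (hsupp : HasCompactSupport u) :
    ∫ x, f x ^ 2 * divergence (nullLagrangianFlux u) x ≤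
      1 / 2 * (∫ x, f x ^ 2 * gradientSq u x) + 4 * K ^ 2 * (∫ x, ∑ k, u x k ^ 2) +
        1 / 2 * ∫ x, f x ^ 2 * divergence u x ^ 2 := by
  have hu_one : ContDiff ℝ 1 u := hu.of_le one_le_two
  have hweight : Continuous fun x => f x ^ 2 := hf.continuous.pow 2
  have hΦ := contDiff_nullLagrangianFlux hu
  have hΦ_supp := hasCompactSupport_nullLagrangianFlux hsupp
  have hgrad := (integrable_mul_gradientSq hu_one hsupp hweight).const_mul (1 / 2)
  have hnorm := integrable_mul_sum_sq (μ := volume) hu.continuous hsupp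
    (continuous_const (y := 4 * (K : ℝ) ^ 2))
  have hdiv := (integrable_mul_divergence_sq hu_one hsupp hweight).const_mul (1 / 2)
  have hflux : Integrable fun x =>
      -∑ j, partialDeriv j f x * (2 * f x * nullLagrangianFlux u x j) :=
    (integrable_finsetSum _ fun j _ =>
      integrable_partialDeriv_mul_of_lipschitzWith hf hΦ.continuous hΦ_supp j).neg
  rw [integral_sq_mul_divergence hf hΦ hΦ_supp, ← integral_neg, ← integral_const_mul,
    ← integral_const_mul, ← integral_const_mul, ← integral_add hgrad hnorm,
    ← integral_add (hgrad.fun_add hnorm) hdiv]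
  exact integral_mono hflux ((hgrad.fun_add hnorm).fun_add hdiv) fun x =>
    neg_sum_mul_flux_le (sum_sq_partialDeriv_le_of_lipschitzWith hf x) (u x) _

theorem integral_sq_mul_gradientSq_le {u : EuclideanSpace ℝ ι → ι → ℝ} (hf : LipschitzWith K f)
    (hu : ContDiff ℝ 2 u) (hsupp : HasCompactSupport u) :
    ∫ x, f x ^ 2 * gradientSq u x ≤
      8 * K ^ 2 * (∫ x, ∑ k, u x k ^ 2) + 3 * (∫ x, f x ^ 2 * divergence u x ^ 2) +
        2 * ∫ x, f x ^ 2 * curlSq u x := by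
  have hu_one : ContDiff ℝ 1 u := hu.of_le one_le_two
  have hweight : Continuous fun x => f x ^ 2 := hf.continuous.pow 2
  have hcurl := integrable_mul_curlSq hu_one hsupp hweight
  have hdiv := integrable_mul_divergence_sq hu_one hsupp hweight
  have hflux := integrable_mul_divergence (contDiff_nullLagrangianFlux hu)
    (hasCompactSupport_nullLagrangianFlux hsupp) hweight
  have energy_identity : ∫ x, f x ^ 2 * gradientSq u x =
      (∫ x, f x ^ 2 * curlSq u x) + (∫ x, f x ^ 2 * divergence u x ^ 2) +
        ∫ x, f x ^ 2 * divergence (nullLagrangianFlux u) x := by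
    simp_rw [gradientSq_eq_curlSq_add hu, mul_add]
    rw [integral_add (hcurl.fun_add hdiv) hflux, integral_add hcurl hdiv]
  linarith [integral_sq_mul_divergence_nullLagrangianFlux_le hf hu hsupp]

end WeightedEstimate

theorem weighted_gradient_estimate_from_constraint_general {ι : Type*} [Fintype ι] [DecidableEq ι]
    {f : EuclideanSpace ℝ ι → ℝ} {K : ℝ≥0} (hf : LipschitzWith K f)
    {G : EuclideanSpace ℝ ι → ι → ι → ℝ} (hG : ContDiff ℝ 2 G) (hsupp : HasCompactSupport G)
    (hcon : ∀ x i j k,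
      partialDeriv k (fun y => G y i j) x - partialDeriv j (fun y => G y i k) x =
        ∑ l, (G x l j * partialDeriv l (fun y => G y i k) x -
          G x l k * partialDeriv l (fun y => G y i j) x)) :
    ∫ x, f x ^ 2 * ∑ i, gradientSq (fun y => G y i) x ≤
      8 * K ^ 2 * (∫ x, ∑ i, ∑ k, G x i k ^ 2) +
        3 * (∫ x, f x ^ 2 * ∑ i, divergence (fun y => G y i) x ^ 2) +
        2 * ∫ x, f x ^ 2 * ∑ i, ∑ j, ∑ k, partialDeriv j (fun y => G y i k) x *
          ∑ l, (G x l k * partialDeriv l (fun y => G y i j) x -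
            G x l j * partialDeriv l (fun y => G y i k) x) := by
  have hrow (i : ι) : ContDiff ℝ 2 fun y => G y i := contDiff_pi.1 hG i
  have hrow_one (i : ι) : ContDiff ℝ 1 fun y => G y i := (hrow i).of_le one_le_two
  have hrow_supp (i : ι) : HasCompactSupport fun y => G y i :=
    hsupp.comp_left (g := fun A : ι → ι → ℝ => A i) rfl
  have hweight : Continuous fun x => f x ^ 2 := hf.continuous.pow 2
  have hcurl (x : EuclideanSpace ℝ ι) : ∑ i, ∑ j, ∑ k, partialDeriv j (fun y => G y i k) x *
        ∑ l, (G x l k * partialDeriv l (fun y => G y i j) x -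
          G x l j * partialDeriv l (fun y => G y i k) x) = ∑ i, curlSq (fun y => G y i) x := by
    simp only [← hcon, curlSq]
  have integral_sum {g : ι → EuclideanSpace ℝ ι → ℝ}
      (hg : ∀ i, Integrable fun x => f x ^ 2 * g i x) :
      ∫ x, f x ^ 2 * ∑ i, g i x = ∑ i, ∫ x, f x ^ 2 * g i x := by
    simp_rw [Finset.mul_sum]
    exact integral_finsetSum _ fun i _ => hg i
  have norm_sum : ∫ x, ∑ i, ∑ k, G x i k ^ 2 = ∑ i, ∫ x, ∑ k, G x i k ^ 2 :=
    integral_finsetSum _ fun i _ => by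
      simpa only [one_mul] using
        integrable_mul_sum_sq (hrow i).continuous (hrow_supp i) (continuous_const (y := 1))
  simp_rw [hcurl]
  rw [integral_sum fun i => integrable_mul_gradientSq (hrow_one i) (hrow_supp i) hweight,
    integral_sum fun i => integrable_mul_divergence_sq (hrow_one i) (hrow_supp i) hweight,
    integral_sum fun i => integrable_mul_curlSq (hrow_one i) (hrow_supp i) hweight, norm_sum]
  simp_rw [Finset.mul_sum, ← Finset.sum_add_distrib]
  exact Finset.sum_le_sum fun i _ => integral_sq_mul_gradientSq_le hf (hrow i) (hrow_supp i)

/-- if `G ∈ C_c^∞(ℝ³; M₃(ℝ))` satisfies the constraint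
`∂_k G_{ij} − ∂_j G_{ik} = G_{lj}∂_l G_{ik} − G_{lk}∂_l G_{ij}`, then for every `t ∈ ℝ`,
`‖(t−r)∇G‖² ≤ 8‖G‖² + 3‖(t−r)∇·G‖² + 2Q`, with
`Q = ∫ (t−r)² ∂_j G_{ik} (G_{lk}∂_l G_{ij} − G_{lj}∂_l G_{ik}) dx`. -/
theorem weighted_gradient_estimate_from_constraint
    (G : MF3) (hG : ContDiff ℝ (⊤ : ℕ∞) G) (hsupp : HasCompactSupport G)
    (hcon : ∀ (x : E3) (i j k : Fin 3),
      pd k (fun y => G y i j) x - pd j (fun y => G y i k) x =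
        ∑ l, (G x l j * pd l (fun y => G y i k) x - G x l k * pd l (fun y => G y i j) x)) :
    ∀ t : ℝ,
      (∫ x : E3, (t - ‖x‖) ^ 2 * ∑ i, ∑ j, ∑ k, (pd j (fun y => G y i k) x) ^ 2)
        ≤ 8 * (∫ x : E3, ∑ i, ∑ k, (G x i k) ^ 2)
          + 3 * (∫ x : E3, (t - ‖x‖) ^ 2 * ∑ i, (∑ j, pd j (fun y => G y i j) x) ^ 2)
          + 2 * ∫ x : E3, (t - ‖x‖) ^ 2 *
              ∑ i, ∑ j, ∑ k, pd j (fun y => G y i k) x *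
                (∑ l, (G x l k * pd l (fun y => G y i j) x
                  - G x l j * pd l (fun y => G y i k) x)) := by
  intro t
  have hweight : LipschitzWith 1 fun x : E3 => t - ‖x‖ := by
    simpa using (LipschitzWith.const t).sub lipschitzWith_one_norm
  have hestimate := weighted_gradient_estimate_from_constraint_general hweight
    (contDiff_infty.1 hG 2) hsupp hcon
  rwa [NNReal.coe_one, one_pow, mul_one] at hestimate

end
end

section
/- Let G be a real 3×3 matrix with ‖G‖_F ≤ 1 and det(I + G) = 1. Then |tr G| ≤ 3 ‖G‖_F². -/
/-!
Expanding gives `det (1 + G) = 1 + tr G + tr (adj G) + det G`, so incompressibility turns the trace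
into `-(tr (adj G) + det G)`, which is quadratic to leading order: `‖tr (adj G)‖ ≤ ‖G‖²` and
`‖det G‖ ≤ ‖G‖³`. This gives `‖tr G‖ ≤ 2 ‖G‖²` when `‖G‖ ≤ 1`; for larger `G` the linear bound
`‖tr G‖ ≤ √3 ‖G‖` already suffices.
-/

open scoped Matrix.Norms.Frobenius

section FrobeniusNorm

variable {m n α : Type*} [Fintype m] [Fintype n] [SeminormedAddCommGroup α]

theorem frobenius_norm_sq_eq_sum (A : Matrix m n α) : ‖A‖ ^ 2 = ∑ i, ∑ j, ‖A i j‖ ^ 2 := by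
  rw [Matrix.frobenius_norm_def, ← Real.sqrt_eq_rpow, Real.sq_sqrt (by positivity)]
  simp only [Real.rpow_two]

theorem norm_entry_le_frobenius_norm (A : Matrix m n α) (i : m) (j : n) : ‖A i j‖ ≤ ‖A‖ := by
  refine le_of_sq_le_sq ?_ (norm_nonneg A)
  rw [frobenius_norm_sq_eq_sum]
  calc
    ‖A i j‖ ^ 2 ≤ ∑ j, ‖A i j‖ ^ 2 :=
      Finset.single_le_sum (f := fun j ↦ ‖A i j‖ ^ 2) (fun _ _ ↦ by positivity) (Finset.mem_univ j)
    _ ≤ ∑ i, ∑ j, ‖A i j‖ ^ 2 :=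
      Finset.single_le_sum (f := fun i ↦ ∑ j, ‖A i j‖ ^ 2) (fun _ _ ↦ by positivity)
        (Finset.mem_univ i)

theorem norm_trace_sq_le_card_mul_frobenius_norm_sq (A : Matrix n n α) :
    ‖A.trace‖ ^ 2 ≤ Fintype.card n * ‖A‖ ^ 2 :=
  calc
    ‖A.trace‖ ^ 2 ≤ (∑ i, ‖A i i‖) ^ 2 := by gcongr; exact norm_sum_le _ _
    _ ≤ Fintype.card n * ∑ i, ‖A i i‖ ^ 2 := sq_sum_le_card_mul_sum_sq
    _ ≤ Fintype.card n * ‖A‖ ^ 2 := by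
      rw [frobenius_norm_sq_eq_sum]
      gcongr with i
      exact Finset.single_le_sum (f := fun j ↦ ‖A i j‖ ^ 2) (fun _ _ ↦ by positivity)
        (Finset.mem_univ i)

end FrobeniusNorm

theorem norm_mul_sub_mul_le_half_sum_sq {R : Type*} [NonUnitalSeminormedRing R] (p q r s : R) :
    ‖p * q - r * s‖ ≤ (‖p‖ ^ 2 + ‖q‖ ^ 2 + ‖r‖ ^ 2 + ‖s‖ ^ 2) / 2 :=
  calc
    ‖p * q - r * s‖ ≤ ‖p‖ * ‖q‖ + ‖r‖ * ‖s‖ :=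
      norm_sub_le_of_le (norm_mul_le p q) (norm_mul_le r s)
    _ ≤ (‖p‖ ^ 2 + ‖q‖ ^ 2 + ‖r‖ ^ 2 + ‖s‖ ^ 2) / 2 := by
      linarith [two_mul_le_add_sq ‖p‖ ‖q‖, two_mul_le_add_sq ‖r‖ ‖s‖]

section CommRing

variable {R : Type*} [CommRing R] (A : Matrix (Fin 3) (Fin 3) R)

theorem det_one_add_fin_three :
    (1 + A).det = 1 + A.trace + A.adjugate.trace + A.det := by
  simp only [Matrix.det_fin_three, Matrix.trace_fin_three, Matrix.adjugate_fin_three,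
    Matrix.add_apply, Matrix.one_apply, Fin.reduceEq, reduceIte, Matrix.of_apply,
    Matrix.cons_val', Matrix.cons_val, Matrix.cons_val_fin_one]
  ring

-- Indexing modulo 3 absorbs the checkerboard signs of the cofactors.
theorem adjugate_fin_three_apply (i j : Fin 3) :
    A.adjugate j i = A (i + 1) (j + 1) * A (i + 2) (j + 2) -
      A (i + 1) (j + 2) * A (i + 2) (j + 1) := by
  rw [Matrix.adjugate_fin_three]
  fin_cases i <;> fin_cases j <;>
    simp only [Fin.zero_eta, Fin.mk_one, Fin.reduceFinMk, Fin.reduceAdd, Matrix.of_apply,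
      Matrix.cons_val', Matrix.cons_val, Matrix.cons_val_fin_one] <;>
    ring

end CommRing

section SeminormedCommRing

variable {R : Type*} [SeminormedCommRing R] (A : Matrix (Fin 3) (Fin 3) R)

theorem norm_adjugate_fin_three_apply_le (i j : Fin 3) :
    ‖A.adjugate j i‖ ≤ (‖A (i + 1) (j + 1)‖ ^ 2 + ‖A (i + 2) (j + 2)‖ ^ 2 +
      ‖A (i + 1) (j + 2)‖ ^ 2 + ‖A (i + 2) (j + 1)‖ ^ 2) / 2 := by
  rw [adjugate_fin_three_apply]
  exact norm_mul_sub_mul_le_half_sum_sq _ _ _ _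

theorem norm_trace_adjugate_fin_three_le : ‖A.adjugate.trace‖ ≤ ‖A‖ ^ 2 := by
  have hcofactors := Finset.sum_le_sum fun i (_ : i ∈ Finset.univ) ↦
    norm_adjugate_fin_three_apply_le A i i
  have hoffdiag : 0 ≤ ‖A 0 1‖ ^ 2 + ‖A 0 2‖ ^ 2 + ‖A 1 0‖ ^ 2 + ‖A 1 2‖ ^ 2 + ‖A 2 0‖ ^ 2 +
      ‖A 2 1‖ ^ 2 := by positivity
  refine (norm_sum_le _ _).trans (hcofactors.trans ?_)
  simp only [frobenius_norm_sq_eq_sum, Fin.sum_univ_three, Fin.reduceAdd]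
  linarith

theorem sum_norm_adjugate_fin_three_le (i : Fin 3) : ∑ j, ‖A.adjugate j i‖ ≤ ‖A‖ ^ 2 := by
  have hcofactors := Finset.sum_le_sum fun j (_ : j ∈ Finset.univ) ↦
    norm_adjugate_fin_three_apply_le A i j
  have hrow : 0 ≤ ∑ j, ‖A i j‖ ^ 2 := by positivity
  refine hcofactors.trans ?_
  rw [frobenius_norm_sq_eq_sum]
  fin_cases i <;>
    simp only [Fin.zero_eta, Fin.mk_one, Fin.reduceFinMk, Fin.reduceAdd,
      Fin.sum_univ_three] at hrow ⊢ <;>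
    linarith

theorem norm_det_fin_three_le : ‖A.det‖ ≤ ‖A‖ ^ 3 :=
  calc
    ‖A.det‖ = ‖∑ j, A 0 j * A.adjugate j 0‖ := by rw [← Matrix.det_eq_sum_mul_adjugate_row]
    _ ≤ ∑ j, ‖A 0 j‖ * ‖A.adjugate j 0‖ := norm_sum_le_of_le _ fun _ _ ↦ norm_mul_le _ _
    _ ≤ ∑ j, ‖A‖ * ‖A.adjugate j 0‖ := by
      gcongr with j
      exact norm_entry_le_frobenius_norm A 0 j
    _ = ‖A‖ * ∑ j, ‖A.adjugate j 0‖ := by rw [Finset.mul_sum]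
    _ ≤ ‖A‖ * ‖A‖ ^ 2 := by
      gcongr
      exact sum_norm_adjugate_fin_three_le A 0
    _ = ‖A‖ ^ 3 := by ring

theorem trace_small_of_incompressible_general (G : Matrix (Fin 3) (Fin 3) R)
    (hdet : (1 + G).det = 1) : ‖G.trace‖ ≤ 2 * ‖G‖ ^ 2 := by
  rcases le_total ‖G‖ 1 with hsmall | hlarge
  · have htrace : G.trace = -(G.adjugate.trace + G.det) := by
      linear_combination hdet - det_one_add_fin_three G
    calc
      ‖G.trace‖ ≤ ‖G.adjugate.trace‖ + ‖G.det‖ := by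
        rw [htrace, norm_neg]
        exact norm_add_le _ _
      _ ≤ ‖G‖ ^ 2 + ‖G‖ ^ 3 :=
        add_le_add (norm_trace_adjugate_fin_three_le G) (norm_det_fin_three_le G)
      _ ≤ ‖G‖ ^ 2 + ‖G‖ ^ 2 := by
        gcongr ‖G‖ ^ 2 + ?_
        exact pow_le_pow_of_le_one (norm_nonneg G) hsmall (by norm_num)
      _ = 2 * ‖G‖ ^ 2 := by ring
  · refine le_of_sq_le_sq ?_ (by positivity)
    calc
      ‖G.trace‖ ^ 2 ≤ 3 * ‖G‖ ^ 2 := by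
        simpa using norm_trace_sq_le_card_mul_frobenius_norm_sq G
      _ ≤ 4 * ‖G‖ ^ 4 := by
        gcongr <;> norm_num
      _ = (2 * ‖G‖ ^ 2) ^ 2 := by ring

end SeminormedCommRing

/-- If `G` is a real 3×3 matrix with `‖G‖_F ≤ 1` and `det(I + G) = 1`,
then `|tr G| ≤ 3 ‖G‖_F²`. -/
theorem trace_small_of_incompressible (G : Matrix (Fin 3) (Fin 3) ℝ)
    (hG : Real.sqrt (∑ i, ∑ j, G i j ^ 2) ≤ 1)
    (hdet : (1 + G).det = 1) :
    |G.trace| ≤ 3 * (∑ i, ∑ j, G i j ^ 2) := by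
  have hnorm : ‖G‖ ^ 2 = ∑ i, ∑ j, G i j ^ 2 := by
    simp only [frobenius_norm_sq_eq_sum, Real.norm_eq_abs, sq_abs]
  rw [← hnorm]
  exact (trace_small_of_incompressible_general G hdet).trans (by gcongr; norm_num)
end
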